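/- Fix integers n > k ≥ 2 and set δ = k(n−k), N = binomial(n,k), and b_2(k,n) = (N^2 − 5N + 4)/2 − Nδ(δ − n − 3)/(2(δ + n + 1)) − (n−1)(N−n) − (n^2 − 3n + 2)/2. Then, as q → ∞ through prime powers, C_{n,k}(q)/|PGL_k(F_q)| = q^{δ−n+1} − (N−n)q^{δ−n} + b_2(k,n)·q^{δ−n−1} + O(q^{δ−n−2}); that is, the quantity C_{n,k}(q)/|PGL_k(F_q)| − (q^{δ−n+1} − (N−n)q^{δ−n} + b_2(k,n)q^{δ−n−1}) is bounded in absolute value by a constant times q^{δ−n−2} for all sufficiently large prime powers q. -/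

import Mathlib

open scoped LinearAlgebra.Projectivization

/-- An ordered `n`-arc in `ℙ^{k-1}(F_q)`: an injective function from `{1,…,n}` to
`ℙ^{k-1}(F_q)` such that any `k` of its points are in general position. -/
def IsArc (F : Type) [Field F] (n k : ℕ) (σ : Fin n → ℙ F (Fin k → F)) : Prop :=
  Function.Injective σ ∧
    ∀ s : Finset (Fin n), s.card = k →
      Module.finrank F ↥(⨆ i ∈ s, (σ i).submodule) = k

namespace Kaipa
open Function Module

section Prob
variable {V ι : Type} [Fintype V] [Fintype ι] [DecidableEq ι]

/-- expectation over the uniform measure on `ι → V` -/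
noncomputable def Ex (f : (ι → V) → ℝ) : ℝ := (∑ v, f v) / (Fintype.card (ι → V) : ℝ)

open Classical in
/-- probability -/
noncomputable def Pr (p : (ι → V) → Prop) : ℝ := Ex (fun v => if p v then 1 else 0)

theorem sum_update (j : ι) (f : (ι → V) → ℝ) :
    ∑ v : ι → V, ∑ x : V, f (update v j x) = (Fintype.card V : ℝ) * ∑ v, f v := by
  let e : (ι → V) × V ≃ (ι → V) × V :=
    { toFun := fun p => (update p.1 j p.2, p.1 j)
      invFun := fun p => (update p.1 j p.2, p.1 j)
      left_inv := fun p => by simp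
      right_inv := fun p => by simp }
  have h1 : ∑ v : ι → V, ∑ x : V, f (update v j x) = ∑ p : (ι → V) × V, f (e p).1 := by
    rw [Fintype.sum_prod_type]
    rfl
  rw [h1, Equiv.sum_comp e (fun p => f p.1), Fintype.sum_prod_type]
  simp [Finset.mul_sum]

theorem Ex_mono {f g : (ι → V) → ℝ} (h : ∀ v, f v ≤ g v) : Ex f ≤ Ex g := by
  unfold Ex
  gcongr with v
  exact h v

theorem Ex_add (f g : (ι → V) → ℝ) : Ex (fun v => f v + g v) = Ex f + Ex g := by
  simp [Ex, Finset.sum_add_distrib, add_div]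

theorem Ex_sub (f g : (ι → V) → ℝ) : Ex (fun v => f v - g v) = Ex f - Ex g := by
  simp [Ex, Finset.sum_sub_distrib, sub_div]

theorem Ex_const_mul (c : ℝ) (f : (ι → V) → ℝ) : Ex (fun v => c * f v) = c * Ex f := by
  simp [Ex, ← Finset.mul_sum, mul_div_assoc]

theorem Ex_sum {α : Type} (s : Finset α) (f : α → (ι → V) → ℝ) :
    Ex (fun v => ∑ a ∈ s, f a v) = ∑ a ∈ s, Ex (f a) := by
  simp only [Ex]
  rw [Finset.sum_comm, Finset.sum_div]

theorem Ex_one [Nonempty V] : Ex (fun _ : ι → V => (1 : ℝ)) = 1 := by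
  simp only [Ex, Finset.sum_const, Finset.card_univ, nsmul_eq_mul, mul_one]
  exact div_self (by positivity)

theorem Ex_abs (f : (ι → V) → ℝ) : |Ex f| ≤ Ex (fun v => |f v|) := by
  unfold Ex
  rw [abs_div, Nat.abs_cast]
  gcongr
  exact Finset.abs_sum_le_sum_abs _ _

theorem Pr_mono {p r : (ι → V) → Prop} (h : ∀ v, p v → r v) : Pr p ≤ Pr r := by
  classical
  apply Ex_mono
  intro v
  by_cases hp : p v
  · simp [hp, h v hp]
  · simp only [hp, if_false]; split_ifs <;> norm_num

theorem Pr_congr {p r : (ι → V) → Prop} (h : ∀ v, p v ↔ r v) : Pr p = Pr r := by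
  have : p = r := funext fun v => propext (h v)
  rw [this]

theorem Pr_nonneg (p : (ι → V) → Prop) : 0 ≤ Pr p := by
  unfold Pr Ex
  apply div_nonneg _ (by positivity)
  apply Finset.sum_nonneg
  intro v _
  split_ifs <;> norm_num

theorem Pr_le_one [Nonempty V] (p : (ι → V) → Prop) : Pr p ≤ 1 := by
  rw [← Ex_one (V := V) (ι := ι)]
  apply Ex_mono
  intro v
  split_ifs <;> norm_num

theorem Pr_or_le (p r : (ι → V) → Prop) : Pr (fun v => p v ∨ r v) ≤ Pr p + Pr r := by
  unfold Pr
  rw [← Ex_add]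
  apply Ex_mono
  intro v
  by_cases h1 : p v <;> by_cases h2 : r v <;> simp [h1, h2]

theorem Pr_split (p r : (ι → V) → Prop) :
    Pr p = Pr (fun v => p v ∧ r v) + Pr (fun v => p v ∧ ¬ r v) := by
  unfold Pr
  rw [← Ex_add]
  congr 1
  ext v
  by_cases h1 : p v <;> by_cases h2 : r v <;> simp [h1, h2]

theorem Pr_not [Nonempty V] (p : (ι → V) → Prop) : Pr (fun v => ¬ p v) = 1 - Pr p := by
  have h := Pr_split (fun _ => True) p
  have h1 : Pr (fun _ : ι → V => True) = 1 := by simp [Pr, Ex_one]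
  simp only [true_and] at h
  linarith

theorem Pr_exists_le {α : Type} (s : Finset α) (p : α → (ι → V) → Prop) :
    Pr (fun v => ∃ a ∈ s, p a v) ≤ ∑ a ∈ s, Pr (p a) := by
  classical
  unfold Pr
  rw [← Ex_sum]
  apply Ex_mono
  intro v
  split_ifs with h
  · obtain ⟨a, ha, hp⟩ := h
    refine le_trans ?_ (Finset.single_le_sum (f := fun a => if p a v then (1:ℝ) else 0) ?_ ha)
    · simp [hp]
    · intro i _; split_ifs <;> norm_num
  · apply Finset.sum_nonneg
    intro v _
    split_ifs <;> norm_num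

end Prob

section Lin
set_option linter.unusedSectionVars false
variable {F V ι : Type} [Field F] [Fintype F] [AddCommGroup V] [Module F V] [Fintype V]
  [Fintype ι] [DecidableEq ι]

/-- the inverse of the cardinality of the field -/
noncomputable def tt (F : Type) [Fintype F] : ℝ := (Fintype.card F : ℝ)⁻¹

theorem tt_pos : 0 < tt F := by unfold tt; positivity

theorem tt_le : tt F ≤ 1 / 2 := by
  unfold tt
  have h : (2:ℝ) ≤ Fintype.card F := by exact_mod_cast Fintype.one_lt_card (α := F)
  rw [one_div]
  exact inv_anti₀ (by norm_num) h

theorem frac (W : Submodule F V) (d : ℕ) (h : finrank F W + d = finrank F V) [Fintype W] :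
    (Fintype.card W : ℝ) / Fintype.card V = tt F ^ d := by
  rw [Module.card_eq_pow_finrank (K := F) (V := W), Module.card_eq_pow_finrank (K := F) (V := V), ← h]
  have h : (Fintype.card F : ℝ) ≠ 0 := by positivity
  unfold tt
  push_cast
  rw [inv_pow, pow_add]
  field_simp

theorem frac_le (W : Submodule F V) (d : ℕ) (h : finrank F W + d ≤ finrank F V) [Fintype W] :
    (Fintype.card W : ℝ) / Fintype.card V ≤ tt F ^ d := by
  obtain ⟨e, he⟩ := Nat.exists_eq_add_of_le h
  rw [frac W (d + e) (by omega)]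
  exact pow_le_pow_of_le_one tt_pos.le (tt_le.trans (by norm_num)) (by omega)

open Classical in
theorem Pr_step (j : ι) (A : (ι → V) → Prop) (H : (ι → V) → Submodule F V)
    (hA : ∀ v x, A (update v j x) ↔ A v) (hH : ∀ v x, H (update v j x) = H v) :
    Pr (fun v => A v ∧ v j ∈ H v) =
      Ex (fun v => (if A v then 1 else 0) * ((Fintype.card (H v) : ℝ) / Fintype.card V)) := by
  unfold Pr Ex
  congr 1
  have h0 : (Fintype.card V : ℝ) ≠ 0 := by positivity
  apply mul_left_cancel₀ h0
  rw [← sum_update j, Finset.mul_sum]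
  apply Finset.sum_congr rfl
  intro v _
  simp only [hA, hH, update_self]
  by_cases h : A v
  · simp only [h, true_and, if_true, one_mul]
    rw [mul_div_cancel₀ _ h0, Finset.sum_boole, Fintype.card_subtype]
  · simp [h]

theorem step_eq (j : ι) (A : (ι → V) → Prop) (H : (ι → V) → Submodule F V)
    (hA : ∀ v x, A (update v j x) ↔ A v) (hH : ∀ v x, H (update v j x) = H v) (d : ℕ)
    (hd : ∀ v, A v → finrank F (H v) + d = finrank F V) :
    Pr (fun v => A v ∧ v j ∈ H v) = Pr A * tt F ^ d := by
  classical
  rw [Pr_step j A H hA hH, mul_comm, Pr, ← Ex_const_mul]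
  congr 1
  ext v
  by_cases h : A v
  · simp only [h, if_true, one_mul, mul_one]; exact frac _ _ (hd v h)
  · simp [h]

theorem step_le (j : ι) (A : (ι → V) → Prop) (H : (ι → V) → Submodule F V)
    (hA : ∀ v x, A (update v j x) ↔ A v) (hH : ∀ v x, H (update v j x) = H v) (d : ℕ)
    (hd : ∀ v, A v → finrank F (H v) + d ≤ finrank F V) :
    Pr (fun v => A v ∧ v j ∈ H v) ≤ Pr A * tt F ^ d := by
  classical
  rw [Pr_step j A H hA hH, mul_comm, Pr, ← Ex_const_mul]
  apply Ex_mono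
  intro v
  by_cases h : A v
  · simp only [h, if_true, one_mul, mul_one]; exact frac_le _ _ (hd v h)
  · simp [h]

/-- linear independence of the vectors indexed by `S` -/
def LI (F : Type) {V ι : Type} [Field F] [AddCommGroup V] [Module F V] (v : ι → V)
    (S : Finset ι) : Prop := LinearIndepOn F v (S : Set ι)

theorem LI_update {j : ι} {S : Finset ι} (h : j ∉ S) (v : ι → V) (x : V) :
    LI F (update v j x) S ↔ LI F v S := by
  unfold LI
  apply linearIndepOn_congr
  intro i hi
  have : i ≠ j := by rintro rfl; exact h hi
  simp [this]

/-- the span of the vectors indexed by `S` -/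
def sp (F : Type) {V ι : Type} [Field F] [AddCommGroup V] [Module F V] (v : ι → V)
    (S : Finset ι) : Submodule F V := Submodule.span F (v '' (S : Set ι))

theorem sp_update {j : ι} {S : Finset ι} (h : j ∉ S) (v : ι → V) (x : V) :
    sp F (update v j x) S = sp F v S := by
  unfold sp
  congr 1
  apply Set.image_congr
  intro i hi
  have : i ≠ j := by rintro rfl; exact h hi
  simp [this]

theorem LI_insert {j : ι} {S : Finset ι} (h : j ∉ S) (v : ι → V) :
    LI F v (insert j S) ↔ LI F v S ∧ v j ∉ sp F v S := by
  unfold LI sp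
  rw [Finset.coe_insert, linearIndepOn_insert (by simpa using h)]

theorem LI_mono {v : ι → V} {S T : Finset ι} (h : S ⊆ T) (hT : LI F v T) : LI F v S :=
  LinearIndepOn.mono hT (by exact_mod_cast h)

theorem finrank_sp {v : ι → V} {S : Finset ι} (h : LI F v S) : finrank F (sp F v S) = S.card := by
  unfold LI LinearIndepOn at h
  unfold sp
  have := finrank_span_eq_card h
  rw [Set.image_eq_range]
  simpa using this

end Lin
end Kaipa

namespace Kaipa
open Function Module

section Est
set_option linter.unusedSectionVars false
variable {F V ι : Type} [Field F] [Fintype F] [AddCommGroup V] [Module F V] [Fintype V]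
  [Fintype ι] [DecidableEq ι]

theorem step_ins (j : ι) (A : (ι → V) → Prop) (hA : ∀ v x, A (update v j x) ↔ A v)
    (R : Finset ι) (hj : j ∉ R) (d : ℕ) (hd : R.card + d = finrank F V) :
    Pr (fun v => (A v ∧ LI F v R) ∧ ¬ LI F v (insert j R)) =
      Pr (fun v => A v ∧ LI F v R) * tt F ^ d := by
  rw [← step_eq j (fun v => A v ∧ LI F v R) (fun v => sp F v R)]
  · apply Pr_congr
    intro v
    rw [LI_insert hj]
    tauto
  · intro v x; rw [hA, LI_update hj]
  · intro v x; rw [sp_update hj]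
  · rintro v ⟨_, h⟩
    rw [finrank_sp h, hd]

theorem step_ins_eq (j : ι) (A : (ι → V) → Prop) (hA : ∀ v x, A (update v j x) ↔ A v)
    (R : Finset ι) (hj : j ∉ R) (d : ℕ) (hd : R.card + d = finrank F V) :
    Pr (fun v => A v ∧ ¬ LI F v (insert j R)) =
      Pr (fun v => A v ∧ ¬ LI F v R) + Pr (fun v => A v ∧ LI F v R) * tt F ^ d := by
  rw [← step_ins j A hA R hj d hd, Pr_split _ (fun v => LI F v R), add_comm]
  congr 1
  · apply Pr_congr
    intro v
    rw [LI_insert hj]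
    tauto
  · apply Pr_congr
    intro v
    tauto

theorem step_ins_le (j : ι) (A : (ι → V) → Prop) (hA : ∀ v x, A (update v j x) ↔ A v)
    (R : Finset ι) (hj : j ∉ R) (d : ℕ) (hd : R.card + d = finrank F V) :
    Pr (fun v => A v ∧ ¬ LI F v (insert j R)) ≤
      Pr (fun v : ι → V => ¬ LI F v R) + Pr A * tt F ^ d := by
  rw [step_ins_eq j A hA R hj d hd]
  have := tt_pos (F := F)
  gcongr
  · exact Pr_mono fun v h => h.2
  · exact Pr_mono fun v h => h.1

theorem dep_eq (j : ι) (R : Finset ι) (hj : j ∉ R) (d : ℕ) (hd : R.card + d = finrank F V) :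
    Pr (fun v : ι → V => ¬ LI F v (insert j R)) =
      Pr (fun v : ι → V => ¬ LI F v R) + (1 - Pr (fun v : ι → V => ¬ LI F v R)) * tt F ^ d := by
  have := step_ins_eq (V := V) j (fun _ => True) (by simp) R hj d hd
  simp only [true_and] at this
  rw [this, ← Pr_not]
  simp

theorem dep_le (S : Finset ι) : ∀ d : ℕ, S.card + d = finrank F V + 1 →
    Pr (fun v : ι → V => ¬ LI F v S) ≤ S.card * tt F ^ d := by
  induction S using Finset.induction_on with
  | empty =>
    intro d hd
    have : Pr (fun v : ι → V => ¬ LI F v ∅) = 0 := by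
      simp [Pr, LI, Ex]
    simp [this]
  | insert j R hj ih =>
    intro d hd
    rw [Finset.card_insert_of_notMem hj] at hd ⊢
    rw [dep_eq j R hj d (by omega)]
    have h1 := ih (d + 1) (by omega)
    have h0 := Pr_nonneg (fun v : ι → V => ¬ LI F v R)
    have ht := tt_pos (F := F)
    have ht1 : tt F ≤ 1 := tt_le.trans (by norm_num)
    have hp : 0 < tt F ^ d := by positivity
    push_cast
    have h2 : (R.card : ℝ) * tt F ^ (d + 1) ≤ R.card * tt F ^ d := by
      gcongr ?_ * ?_
      exact pow_le_pow_of_le_one ht.le ht1 (by omega)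
    nlinarith

theorem dep_le' (S : Finset ι) (d : ℕ) (hS : S.card + d = finrank F V + 1) (hd : 1 ≤ d) :
    Pr (fun v : ι → V => ¬ LI F v S) ≤ finrank F V * tt F ^ d := by
  refine (dep_le S d hS).trans ?_
  have ht := tt_pos (F := F)
  gcongr
  omega

theorem E2_le (R S : Finset ι) (hR : R.card + 1 = finrank F V) (hS : S.card = finrank F V)
    (h : ¬ R ⊆ S) :
    Pr (fun v : ι → V => ¬ LI F v S ∧ ¬ LI F v R) ≤ 2 * finrank F V * tt F ^ 3 := by
  obtain ⟨j, hjR, hjS⟩ := Finset.not_subset.1 h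
  have h1 := step_ins_le (F := F) (V := V) j (fun v => ¬ LI F v S)
    (fun v x => by rw [LI_update hjS]) (R.erase j) (by simp) 2 
    (by have := Finset.card_erase_add_one hjR; omega)
  rw [Finset.insert_erase hjR] at h1
  have h2 := dep_le' (F := F) (V := V) (R.erase j) 3
    (by have := Finset.card_erase_add_one hjR; omega) (by norm_num)
  have h3 := dep_le' (F := F) (V := V) S 1 (by omega) (by norm_num)
  have ht := tt_pos (F := F)
  have : Pr (fun v : ι → V => ¬ LI F v S) * tt F ^ 2 ≤ finrank F V * tt F ^ 1 * tt F ^ 2 := by gcongr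
  linarith

theorem pair_le (S T : Finset ι) (hS : S.card = finrank F V) (hT : T.card = finrank F V)
    (h : S ≠ T) :
    Pr (fun v : ι → V => ¬ LI F v S ∧ ¬ LI F v T) ≤ 2 * finrank F V * tt F ^ 2 := by
  have h' : ¬ T ⊆ S := fun h' => h (Finset.eq_of_subset_of_card_le h' (by omega)).symm
  obtain ⟨j, hjR, hjS⟩ := Finset.not_subset.1 h'
  have h1 := step_ins_le (F := F) (V := V) j (fun v => ¬ LI F v S)
    (fun v x => by rw [LI_update hjS]) (T.erase j) (by simp) 1
    (by have := Finset.card_erase_add_one hjR; omega)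
  rw [Finset.insert_erase hjR] at h1
  have h2 := dep_le' (F := F) (V := V) (T.erase j) 2
    (by have := Finset.card_erase_add_one hjR; omega) (by norm_num)
  have h3 := dep_le' (F := F) (V := V) S 1 (by omega) (by norm_num)
  have ht := tt_pos (F := F)
  have : Pr (fun v : ι → V => ¬ LI F v S) * tt F ^ 1 ≤ finrank F V * tt F ^ 1 * tt F ^ 1 := by gcongr
  linarith

/-- all `k-1` subsets are independent -/
def QQ (F : Type) {V ι : Type} [Field F] [AddCommGroup V] [Module F V] (v : ι → V) : Prop :=
  ∀ R : Finset ι, R.card + 1 = finrank F V → LI F v R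

theorem E3_le_i (S T U : Finset ι) (hS : S.card = finrank F V) (hT : T.card = finrank F V)
    (hU : U.card = finrank F V) (hST : S ≠ T) (h : ¬ U ⊆ S ∪ T) :
    Pr (fun v : ι → V => QQ F v ∧ ¬ LI F v S ∧ ¬ LI F v T ∧ ¬ LI F v U) ≤
      2 * finrank F V * tt F ^ 3 := by
  obtain ⟨j, hjU, hj⟩ := Finset.not_subset.1 h
  simp only [Finset.mem_union, not_or] at hj
  have hc := Finset.card_erase_add_one hjU
  have h1 := step_ins (F := F) (V := V) j (fun v => ¬ LI F v S ∧ ¬ LI F v T)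
    (fun v x => by rw [LI_update hj.1, LI_update hj.2]) (U.erase j) (by simp) 1 (by omega)
  rw [Finset.insert_erase hjU] at h1
  have h2 : Pr (fun v : ι → V => QQ F v ∧ ¬ LI F v S ∧ ¬ LI F v T ∧ ¬ LI F v U) ≤
      Pr (fun v : ι → V => ((¬ LI F v S ∧ ¬ LI F v T) ∧ LI F v (U.erase j)) ∧ ¬ LI F v U) := by
    apply Pr_mono
    rintro v ⟨hq, h1, h2, h3⟩
    exact ⟨⟨⟨h1, h2⟩, hq _ (by omega)⟩, h3⟩
  have h3 := pair_le (F := F) (V := V) S T hS hT hST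
  have h4 : Pr (fun v : ι → V => (¬ LI F v S ∧ ¬ LI F v T) ∧ LI F v (U.erase j)) ≤ _ := 
    (Pr_mono fun v h => h.1).trans h3
  have ht := tt_pos (F := F)
  rw [h1] at h2
  refine h2.trans ?_
  calc _ ≤ (2 * finrank F V * tt F ^ 2) * tt F ^ 1 := by gcongr
    _ = _ := by ring

theorem three_le (R : Finset ι) (hR : R.card + 1 = finrank F V) (a b c : ι) (ha : a ∉ R)
    (hb : b ∉ R) (hc : c ∉ R) (hab : a ≠ b) (hac : a ≠ c) (hbc : b ≠ c) :
    Pr (fun v : ι → V => LI F v R ∧ v a ∈ sp F v R ∧ v b ∈ sp F v R ∧ v c ∈ sp F v R) ≤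
      tt F ^ 3 := by
  have h1 := step_eq (F := F) (V := V) a (fun v => LI F v R) (fun v => sp F v R)
    (fun v x => LI_update ha v x) (fun v x => sp_update ha v x) 1
    (fun v h => by rw [finrank_sp h, hR])
  have h2 := step_eq (F := F) (V := V) b (fun v => LI F v R ∧ v a ∈ sp F v R) (fun v => sp F v R)
    (fun v x => by simp only [LI_update hb, sp_update hb, update_of_ne hab])
    (fun v x => sp_update hb v x) 1
    (fun v h => by rw [finrank_sp h.1, hR])
  have h3 := step_eq (V := V) c (fun v => (LI F v R ∧ v a ∈ sp F v R) ∧ v b ∈ sp F v R)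
    (fun v => sp F v R)
    (fun v x => by simp only [LI_update hc, sp_update hc, update_of_ne hac, update_of_ne hbc])
    (fun v x => sp_update hc v x) 1
    (fun v h => by rw [finrank_sp h.1.1, hR])
  have h4 : Pr (fun v : ι → V => LI F v R ∧ v a ∈ sp F v R ∧ v b ∈ sp F v R ∧ v c ∈ sp F v R) =
     Pr (fun v : ι → V => ((LI F v R ∧ v a ∈ sp F v R) ∧ v b ∈ sp F v R) ∧ v c ∈ sp F v R) :=
    Pr_congr fun v => by tauto
  rw [h4, h3, h2, h1]
  have ht := tt_pos (F := F)
  have : Pr (fun v : ι → V => LI F v R) ≤ 1 := Pr_le_one _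
  calc _ ≤ 1 * tt F ^ 1 * tt F ^ 1 * tt F ^ 1 := by gcongr
    _ = _ := by ring

theorem dep_mem {j : ι} {S : Finset ι} (hj : j ∈ S) (v : ι → V) (h : ¬ LI F v S)
    (h2 : LI F v (S.erase j)) : v j ∈ sp F v (S.erase j) := by
  by_contra hc
  apply h
  rw [← Finset.insert_erase hj, LI_insert (by simp)]
  exact ⟨h2, hc⟩

theorem mem_sp {i : ι} {S : Finset ι} (h : i ∈ S) (v : ι → V) : v i ∈ sp F v S :=
  Submodule.subset_span ⟨i, by simpa using h, rfl⟩

theorem E3_le_ii (S T U : Finset ι) (hS : S.card = finrank F V) (hT : T.card = finrank F V)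
    (hU : U.card = finrank F V) (hTU : T ≠ U) (h : U ⊆ S ∪ T) (h2 : 2 ≤ (U \ S).card) :
    Pr (fun v : ι → V => QQ F v ∧ ¬ LI F v S ∧ ¬ LI F v T ∧ ¬ LI F v U) ≤
      2 * finrank F V * tt F ^ 3 := by
  have h' : ¬ U ⊆ T := fun h' => hTU (Finset.eq_of_subset_of_card_le h' (by omega)).symm
  obtain ⟨j, hjU, hjT⟩ := Finset.not_subset.1 h'
  have hjS : j ∈ S := by
    have := h hjU
    simp only [Finset.mem_union] at this
    tauto
  obtain ⟨a, ha, b, hb, hab⟩ := Finset.one_lt_card.1 h2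
  simp only [Finset.mem_sdiff] at ha hb
  have hcU := Finset.card_erase_add_one hjU
  have hcS := Finset.card_erase_add_one hjS
  have haj : a ≠ j := by rintro rfl; exact ha.2 hjS
  have hbj : b ≠ j := by rintro rfl; exact hb.2 hjS
  have hjS' : j ∉ S.erase j := by simp
  have hjU' : j ∉ U.erase j := by simp
  let A : (ι → V) → Prop := fun v => ¬ LI F v T ∧ LI F v (S.erase j) ∧ LI F v (U.erase j) ∧
    sp F v (S.erase j) ≠ sp F v (U.erase j)
  have e1 := step_le (V := V) j A (fun v => sp F v (S.erase j) ⊓ sp F v (U.erase j))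
    (fun v x => by simp only [A, LI_update hjT, LI_update hjS', LI_update hjU', sp_update hjS',
      sp_update hjU'])
    (fun v x => by rw [sp_update hjS', sp_update hjU']) 2
    (by
      rintro v ⟨-, h1, h2, h3⟩
      have f1 := finrank_sp h1
      have f2 := finrank_sp h2
      have hlt : sp F v (S.erase j) ⊓ sp F v (U.erase j) < sp F v (S.erase j) := by
        refine lt_of_le_of_ne inf_le_left fun hh => h3 ?_
        apply Submodule.eq_of_le_of_finrank_eq (inf_eq_left.1 hh)
        omega
      have := Submodule.finrank_lt_finrank_of_lt hlt
      omega)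
  have e2 := three_le (F := F) (V := V) (S.erase j) (by omega) j a b hjS' (by simp [ha.2])
    (by simp [hb.2]) haj.symm hbj.symm hab
  have e3 : Pr (fun v : ι → V => QQ F v ∧ ¬ LI F v S ∧ ¬ LI F v T ∧ ¬ LI F v U) ≤ _ :=
    (Pr_mono (r := fun v => (A v ∧ v j ∈ sp F v (S.erase j) ⊓ sp F v (U.erase j)) ∨
      (LI F v (S.erase j) ∧ v j ∈ sp F v (S.erase j) ∧ v a ∈ sp F v (S.erase j) ∧
        v b ∈ sp F v (S.erase j))) (by
      rintro v ⟨hq, h1, h2, h3⟩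
      have l1 : LI F v (S.erase j) := hq _ (by omega)
      have l2 : LI F v (U.erase j) := hq _ (by omega)
      have m1 := dep_mem hjS v h1 l1
      have m2 := dep_mem hjU v h3 l2
      by_cases hs : sp F v (S.erase j) = sp F v (U.erase j)
      · right
        refine ⟨l1, m1, ?_, ?_⟩
        · rw [hs]; exact mem_sp (by simp [haj, ha.1]) v
        · rw [hs]; exact mem_sp (by simp [hbj, hb.1]) v
      · left
        exact ⟨⟨h2, l1, l2, hs⟩, m1, m2⟩)).trans (Pr_or_le _ _)
  have e4 : Pr A ≤ finrank F V * tt F ^ 1 :=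
    (Pr_mono fun v h => h.1).trans (dep_le' (F := F) (V := V) T 1 (by omega) le_rfl)
  have ht := tt_pos (F := F)
  have e5 : Pr A * tt F ^ 2 ≤ finrank F V * tt F ^ 1 * tt F ^ 2 := by gcongr
  have hk : (1 : ℝ) ≤ finrank F V := by exact_mod_cast (by omega)
  have hp : 0 < tt F ^ 3 := by positivity
  nlinarith

theorem E3_le (S T U : Finset ι) (hS : S.card = finrank F V) (hT : T.card = finrank F V)
    (hU : U.card = finrank F V) (hST : S ≠ T) (hSU : S ≠ U) (hTU : T ≠ U)
    (h : ¬ ∃ W : Finset ι, W.card = finrank F V + 1 ∧ S ⊆ W ∧ T ⊆ W ∧ U ⊆ W) :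
    Pr (fun v : ι → V => QQ F v ∧ ¬ LI F v S ∧ ¬ LI F v T ∧ ¬ LI F v U) ≤
      2 * finrank F V * tt F ^ 3 := by
  by_cases h1 : U ⊆ S ∪ T
  · by_cases h2 : T ⊆ S ∪ U
    · apply E3_le_ii S T U hS hT hU hTU h1
      by_contra h3
      have h4 : (U \ S).card ≠ 0 := by
        rw [Finset.card_ne_zero, Finset.sdiff_nonempty]
        exact fun h' => hSU (Finset.eq_of_subset_of_card_le h' (by omega)).symm
      apply h
      refine ⟨S ∪ U, ?_, Finset.subset_union_left, h2, Finset.subset_union_right⟩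
      have := Finset.card_sdiff_add_card U S
      rw [Finset.union_comm] at this
      omega
    · refine le_trans (Pr_mono ?_) (E3_le_i S U T hS hU hT hSU h2)
      tauto
  · exact E3_le_i S T U hS hT hU hST h1

theorem R_asym (R : Finset ι) (hR : R.card + 1 = finrank F V) (hk : 2 ≤ finrank F V) :
    |Pr (fun v : ι → V => ¬ LI F v R) - tt F ^ 2| ≤ finrank F V * tt F ^ 3 := by
  obtain ⟨j, hj⟩ : R.Nonempty := by rw [← Finset.card_pos]; omega
  have hc := Finset.card_erase_add_one hj
  have h1 := dep_eq (F := F) (V := V) j (R.erase j) (by simp) 2 (by omega)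
  rw [Finset.insert_erase hj] at h1
  have h2 := dep_le' (F := F) (V := V) (R.erase j) 3 (by omega) (by norm_num)
  have h0 := Pr_nonneg (fun v : ι → V => ¬ LI F v (R.erase j))
  have ht := tt_pos (F := F)
  have ht1 := tt_le (F := F)
  have : tt F ^ 2 ≤ 1 := pow_le_one₀ ht.le (by linarith)
  have hp : 0 < tt F ^ 2 := by positivity
  rw [h1, abs_le]
  constructor <;> nlinarith

theorem S_asym (S : Finset ι) (hS : S.card = finrank F V) (hk : 2 ≤ finrank F V) :
    |Pr (fun v : ι → V => ¬ LI F v S) - (tt F + tt F ^ 2)| ≤ 2 * finrank F V * tt F ^ 3 := by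
  obtain ⟨j, hj⟩ : S.Nonempty := by rw [← Finset.card_pos]; omega
  have hc := Finset.card_erase_add_one hj
  have h1 := dep_eq (F := F) (V := V) j (S.erase j) (by simp) 1 (by omega)
  rw [Finset.insert_erase hj] at h1
  have h2 := R_asym (F := F) (V := V) (S.erase j) (by omega) hk
  have ht := tt_pos (F := F)
  have ht1 := tt_le (F := F)
  have hk' : (2 : ℝ) ≤ finrank F V := by exact_mod_cast hk
  have hp : 0 < tt F ^ 3 := by positivity
  set e := Pr (fun v : ι → V => ¬ LI F v (S.erase j)) - tt F ^ 2 with he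
  have h3 : Pr (fun v : ι → V => ¬ LI F v S) - (tt F + tt F ^ 2) = e * (1 - tt F) - tt F ^ 3 := by
    rw [h1, he]; ring
  rw [h3]
  calc _ ≤ |e * (1 - tt F)| + |tt F ^ 3| := abs_sub _ _
    _ = |e| * (1 - tt F) + tt F ^ 3 := by
      rw [abs_mul, abs_of_pos hp, abs_of_nonneg (a := 1 - tt F) (by linarith)]
    _ ≤ (finrank F V * tt F ^ 3) * 1 + tt F ^ 3 := by
      gcongr
      · linarith
      · linarith
    _ ≤ _ := by nlinarith

theorem RR_asym (R R' : Finset ι) (hR : R.card + 1 = finrank F V) (hR' : R'.card + 1 = finrank F V)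
    (a b : ι) (hab : a ≠ b) (ha : a ∉ R) (ha' : a ∉ R') (hb : b ∉ R) (hb' : b ∉ R') :
    |Pr (fun v : ι → V => (LI F v R ∧ LI F v R') ∧ ¬ LI F v (insert a R) ∧
      ¬ LI F v (insert b R')) - tt F ^ 2| ≤ finrank F V * tt F ^ 3 := by
  have h1 := step_ins (F := F) (V := V) a (fun v => LI F v R') (fun v x => by rw [LI_update ha'])
    R ha 1 hR
  have h2 := step_ins (F := F) (V := V) b (fun v => LI F v R ∧ ¬ LI F v (insert a R))
    (fun v x => by rw [LI_update hb, LI_update (by simp [hb, hab.symm])])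
    R' hb' 1 hR'
  have h3 : Pr (fun v : ι → V => (LI F v R ∧ LI F v R') ∧ ¬ LI F v (insert a R) ∧
      ¬ LI F v (insert b R')) = Pr (fun v : ι → V => LI F v R' ∧ LI F v R) * tt F ^ 2 := by
    rw [pow_two, ← mul_assoc]
    rw [pow_one] at h1 h2
    rw [← h1]
    trans
    · trans
      swap
      · exact h2
      · apply Pr_congr; intro v; tauto
    · congr 1
      apply Pr_congr; intro v; tauto
  have h4 : 1 - 2 * finrank F V * tt F ^ 2 ≤ Pr (fun v : ι → V => LI F v R' ∧ LI F v R) := by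
    have e1 := Pr_not (fun v : ι → V => LI F v R' ∧ LI F v R)
    have e2 : Pr (fun v : ι → V => ¬ (LI F v R' ∧ LI F v R)) ≤ _ :=
      (Pr_mono (fun v h => by tauto)).trans
        (Pr_or_le (fun v : ι → V => ¬ LI F v R') (fun v : ι → V => ¬ LI F v R))
    have e3 := dep_le' (F := F) (V := V) R 2 (by omega) (by norm_num)
    have e4 := dep_le' (F := F) (V := V) R' 2 (by omega) (by norm_num)
    linarith
  have h5 : Pr (fun v : ι → V => LI F v R' ∧ LI F v R) ≤ 1 := Pr_le_one _
  rw [h3]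
  have ht := tt_pos (F := F)
  have ht1 := tt_le (F := F)
  set p := Pr (fun v : ι → V => LI F v R' ∧ LI F v R)
  have h6 : p * tt F ^ 2 - tt F ^ 2 = -((1 - p) * tt F ^ 2) := by ring
  rw [h6, abs_neg, abs_of_nonneg (by have : 0 ≤ 1 - p := by linarith
                                     positivity)]
  calc _ ≤ (2 * finrank F V * tt F ^ 2) * tt F ^ 2 := by gcongr; linarith
    _ = (finrank F V * tt F ^ 3) * (2 * tt F) := by ring
    _ ≤ (finrank F V * tt F ^ 3) * 1 := by gcongr; linarith
    _ = _ := by ring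

/-- all `k`-subsets of `W` are dependent -/
def WW (F : Type) {V ι : Type} [Field F] [AddCommGroup V] [Module F V] (v : ι → V)
    (W : Finset ι) : Prop := ∀ S ⊆ W, S.card = finrank F V → ¬ LI F v S

theorem WW_of (W R : Finset ι) (v : ι → V) (hR : LI F v R) (hc : R.card + 1 = finrank F V)
    (h : ∀ i ∈ W, v i ∈ sp F v R) : WW F v W := by
  intro S hS hcS hLI
  have h1 : sp F v S ≤ sp F v R := by
    unfold sp
    rw [Submodule.span_le]
    rintro _ ⟨i, hi, rfl⟩
    exact h i (hS hi)
  have := Submodule.finrank_mono h1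
  rw [finrank_sp hLI, finrank_sp hR] at this
  omega

theorem W_asym (W : Finset ι) (hW : W.card = finrank F V + 1) (hk : 2 ≤ finrank F V) :
    |Pr (fun v : ι → V => WW F v W) - tt F ^ 2| ≤ 3 * finrank F V * tt F ^ 3 := by
  obtain ⟨a, ha⟩ : W.Nonempty := by rw [← Finset.card_pos]; omega
  have hca := Finset.card_erase_add_one ha
  obtain ⟨b, hb⟩ : (W.erase a).Nonempty := by rw [← Finset.card_pos]; omega
  have hcb := Finset.card_erase_add_one hb
  set R := (W.erase a).erase b with hRdef
  obtain ⟨c, hc⟩ : R.Nonempty := by rw [← Finset.card_pos]; omega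
  have hba : b ≠ a := (Finset.mem_erase.1 hb).1
  have hbW := (Finset.mem_erase.1 hb).2
  have hRW : R ⊆ W := (Finset.erase_subset _ _).trans (Finset.erase_subset _ _)
  have haR : a ∉ R := by simp [hRdef]
  have hbR : b ∉ R := by simp [hRdef]
  have h1 := RR_asym (F := F) (V := V) R R (by omega) (by omega) a b hba.symm haR haR hbR hbR
  have hcc := Finset.card_erase_add_one (hRW hc)
  have h2 := E2_le (F := F) (V := V) R (W.erase c) (by omega) (by omega) (fun h => by
    have := h hc
    simp at this)
  rw [Pr_split _ (fun v => LI F v R)]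
  have h3 : Pr (fun v : ι → V => WW F v W ∧ LI F v R) = Pr (fun v : ι → V => (LI F v R ∧ LI F v R) ∧ ¬ LI F v (insert a R) ∧
      ¬ LI F v (insert b R)) := by
    apply Pr_congr
    intro v
    constructor
    · rintro ⟨h, hl⟩
      refine ⟨⟨hl, hl⟩, h _ ?_ ?_, h _ ?_ ?_⟩
      · exact Finset.insert_subset ha hRW
      · rw [Finset.card_insert_of_notMem haR]; omega
      · exact Finset.insert_subset hbW hRW
      · rw [Finset.card_insert_of_notMem hbR]; omega
    · rintro ⟨⟨hl, -⟩, h1, h2⟩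
      refine ⟨WW_of W R v hl (by omega) ?_, hl⟩
      intro i hi
      rw [LI_insert haR] at h1
      rw [LI_insert hbR] at h2
      by_cases hia : i = a
      · subst hia; tauto
      · by_cases hib : i = b
        · subst hib; tauto
        · apply mem_sp; simp [hRdef, hia, hib, hi]
  have h4 : Pr (fun v : ι → V => WW F v W ∧ ¬ LI F v R) ≤ 2 * finrank F V * tt F ^ 3 := by
    refine (Pr_mono ?_).trans h2
    rintro v ⟨h, h'⟩
    exact ⟨h _ (Finset.erase_subset _ _) (by omega), h'⟩
  have h0 := Pr_nonneg (fun v : ι → V => WW F v W ∧ ¬ LI F v R)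
  rw [h3]
  rw [abs_le] at h1 ⊢
  have ht := tt_pos (F := F)
  have : 0 ≤ finrank F V * tt F ^ 3 := by positivity
  constructor <;> linarith

theorem far_asym (S T : Finset ι) (hS : S.card = finrank F V) (hT : T.card = finrank F V)
    (h : (S ∩ T).card + 2 ≤ finrank F V) :
    |Pr (fun v : ι → V => ¬ LI F v S ∧ ¬ LI F v T) - tt F ^ 2| ≤ 5 * finrank F V * tt F ^ 3 := by
  have c1 := Finset.card_sdiff_add_card_inter S T
  have c2 := Finset.card_sdiff_add_card_inter T S
  rw [Finset.inter_comm] at c2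
  obtain ⟨a, ha, a', ha', haa'⟩ := Finset.one_lt_card.1 (show 1 < (S \ T).card by omega)
  obtain ⟨b, hb, b', hb', hbb'⟩ := Finset.one_lt_card.1 (show 1 < (T \ S).card by omega)
  simp only [Finset.mem_sdiff] at ha ha' hb hb'
  have hcS := Finset.card_erase_add_one ha.1
  have hcT := Finset.card_erase_add_one hb.1
  have hab : a ≠ b := by rintro rfl; exact ha.2 hb.1
  have h1 := RR_asym (F := F) (V := V) (S.erase a) (T.erase b) (by omega) (by omega) a b hab
    (by simp) (by simp [ha.2]) (by simp [hb.2]) (by simp)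
  rw [Finset.insert_erase ha.1, Finset.insert_erase hb.1] at h1
  have h2 := E2_le (F := F) (V := V) (S.erase a) T (by omega) hT (fun h => 
    ha'.2 (h (Finset.mem_erase.2 ⟨haa'.symm, ha'.1⟩)))
  have h3 := E2_le (F := F) (V := V) (T.erase b) S (by omega) hS (fun h => 
    hb'.2 (h (Finset.mem_erase.2 ⟨hbb'.symm, hb'.1⟩)))
  rw [Pr_split _ (fun v => LI F v (S.erase a) ∧ LI F v (T.erase b))]
  have h4 : Pr (fun v : ι → V => (¬ LI F v S ∧ ¬ LI F v T) ∧
      (LI F v (S.erase a) ∧ LI F v (T.erase b))) = _ := Pr_congr fun v => and_comm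
  have h5 : Pr (fun v : ι → V => (¬ LI F v S ∧ ¬ LI F v T) ∧
      ¬ (LI F v (S.erase a) ∧ LI F v (T.erase b))) ≤ _ :=
    (Pr_mono fun v h => by tauto).trans (Pr_or_le (fun v : ι → V => ¬ LI F v T ∧ ¬ LI F v (S.erase a))
      (fun v : ι → V => ¬ LI F v S ∧ ¬ LI F v (T.erase b)))
  have h0 := Pr_nonneg (fun v : ι → V => (¬ LI F v S ∧ ¬ LI F v T) ∧
      ¬ (LI F v (S.erase a) ∧ LI F v (T.erase b)))
  rw [h4]
  rw [abs_le] at h1 ⊢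
  have ht := tt_pos (F := F)
  have : 0 ≤ finrank F V * tt F ^ 3 := by positivity
  constructor <;> linarith

end Est
end Kaipa

namespace Kaipa
open Function Module

section Comb
set_option linter.unusedSectionVars false
variable {F V ι : Type} [Field F] [Fintype F] [AddCommGroup V] [Module F V] [Fintype V]
  [Fintype ι] [DecidableEq ι]

open Classical in
/-- dependent `k`-sets -/
noncomputable def Bs (F : Type) {V ι : Type} [Field F] [AddCommGroup V] [Module F V] [Fintype ι]
    (v : ι → V) : Finset (Finset ι) :=
  (Finset.powersetCard (finrank F V) Finset.univ).filter (fun S => ¬ LI F v S)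

open Classical in
/-- dependent `k-1`-sets -/
noncomputable def Rs (F : Type) {V ι : Type} [Field F] [AddCommGroup V] [Module F V] [Fintype ι]
    (v : ι → V) : Finset (Finset ι) :=
  (Finset.powersetCard (finrank F V - 1) Finset.univ).filter (fun S => ¬ LI F v S)

open Classical in
/-- `k+1`-sets of non-full rank -/
noncomputable def Ws (F : Type) {V ι : Type} [Field F] [AddCommGroup V] [Module F V] [Fintype ι]
    (v : ι → V) : Finset (Finset ι) :=
  (Finset.powersetCard (finrank F V + 1) Finset.univ).filter (fun S => WW F v S)

/-- far pairs -/
def far (ι : Type) [Fintype ι] [DecidableEq ι] (k : ℕ) : Finset (Finset ι × Finset ι) :=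
  ((Finset.powersetCard k Finset.univ) ×ˢ (Finset.powersetCard k Finset.univ)).filter
    (fun p => (p.1 ∩ p.2).card + 2 ≤ k)

open Classical in
/-- far pairs of dependent sets -/
noncomputable def Fs (F : Type) {V ι : Type} [Field F] [AddCommGroup V] [Module F V] [Fintype ι]
    [DecidableEq ι]
    (v : ι → V) : Finset (Finset ι × Finset ι) :=
  (far ι (finrank F V)).filter (fun p => ¬ LI F v p.1 ∧ ¬ LI F v p.2)

theorem mem_Bs {v : ι → V} {S : Finset ι} : S ∈ Bs F v ↔ S.card = finrank F V ∧ ¬ LI F v S := by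
  simp [Bs, Finset.mem_powersetCard]

theorem mem_Rs {v : ι → V} {S : Finset ι} (hk : 2 ≤ finrank F V) :
    S ∈ Rs F v ↔ S.card + 1 = finrank F V ∧ ¬ LI F v S := by
  simp only [Rs, Finset.mem_powersetCard, Finset.mem_filter, Finset.subset_univ, true_and]
  have : S.card = finrank F V - 1 ↔ S.card + 1 = finrank F V := by omega
  rw [this]

theorem mem_Ws {v : ι → V} {S : Finset ι} :
    S ∈ Ws F v ↔ S.card = finrank F V + 1 ∧ WW F v S := by
  simp [Ws, Finset.mem_powersetCard]

theorem mem_far {S T : Finset ι} {k : ℕ} :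
    (S, T) ∈ far ι k ↔ S.card = k ∧ T.card = k ∧ (S ∩ T).card + 2 ≤ k := by
  simp [far, Finset.mem_powersetCard, and_assoc]

theorem mem_Fs {v : ι → V} {S T : Finset ι} :
    (S, T) ∈ Fs F v ↔ S ∈ Bs F v ∧ T ∈ Bs F v ∧ (S ∩ T).card + 2 ≤ finrank F V := by
  classical
  rw [Fs, Finset.mem_filter, mem_far, mem_Bs, mem_Bs]
  dsimp only
  tauto

/-- exceptional event 1 -/
def E2 (F : Type) {V ι : Type} [Field F] [AddCommGroup V] [Module F V]
    (v : ι → V) (R S : Finset ι) : Prop :=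
  (R.card + 1 = finrank F V ∧ S.card = finrank F V ∧ ¬ R ⊆ S) ∧ ¬ LI F v S ∧ ¬ LI F v R

/-- exceptional event 2 -/
def E3 (F : Type) {V ι : Type} [Field F] [AddCommGroup V] [Module F V]
    (v : ι → V) (S T U : Finset ι) : Prop :=
  (S.card = finrank F V ∧ T.card = finrank F V ∧ U.card = finrank F V ∧ S ≠ T ∧ S ≠ U ∧ T ≠ U ∧
    ¬ ∃ W : Finset ι, W.card = finrank F V + 1 ∧ S ⊆ W ∧ T ⊆ W ∧ U ⊆ W) ∧
  (QQ F v ∧ ¬ LI F v S ∧ ¬ LI F v T ∧ ¬ LI F v U)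

theorem WW_sub {v : ι → V} {W : Finset ι} (h : WW F v W) :
    Finset.powersetCard (finrank F V) W ⊆ Bs F v := by
  intro S hS
  rw [Finset.mem_powersetCard] at hS
  exact mem_Bs.2 ⟨hS.2, h S hS.1 hS.2⟩

theorem WW_card {v : ι → V} {W : Finset ι} (hW : W ∈ Ws F v) : finrank F V + 1 ≤ (Bs F v).card := by
  rw [mem_Ws] at hW
  have := Finset.card_le_card (WW_sub hW.2)
  rw [Finset.card_powersetCard, hW.1, Nat.choose_succ_self_right] at this
  exact this

theorem caseA (hk : 2 ≤ finrank F V) (hn : finrank F V < Fintype.card ι) (v : ι → V)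
    (h2 : ∀ R S, ¬ E2 F v R S) (R : Finset ι) (hR : R.card + 1 = finrank F V)
    (hdep : ¬ LI F v R) :
    (Bs F v).card + finrank F V = Fintype.card ι + 1 ∧ (Rs F v).card = 1 ∧ (Ws F v).card = 0 ∧
      (Fs F v).card = 0 := by
  have key : ∀ S ∈ Bs F v, R ⊆ S := by
    intro S hS
    rw [mem_Bs] at hS
    by_contra hc
    exact h2 R S ⟨⟨hR, hS.1, hc⟩, hS.2, hdep⟩
  refine ⟨?_, ?_, ?_, ?_⟩
  · have : Bs F v = Rᶜ.image (fun x => insert x R) := by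
      ext S
      simp only [Finset.mem_image, Finset.mem_compl]
      constructor
      · intro hS
        have hRS := key S hS
        rw [mem_Bs] at hS
        have hc := Finset.card_sdiff_add_card_eq_card hRS
        obtain ⟨x, hx⟩ := Finset.card_eq_one.1 (show (S \ R).card = 1 by omega)
        have hx' : x ∈ S \ R := by rw [hx]; simp
        rw [Finset.mem_sdiff] at hx'
        refine ⟨x, hx'.2, ?_⟩
        rw [Finset.insert_eq, ← hx, Finset.sdiff_union_of_subset hRS]
      · rintro ⟨x, hx, rfl⟩
        rw [mem_Bs, Finset.card_insert_of_notMem hx]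
        exact ⟨hR, fun h => hdep (LI_mono (Finset.subset_insert _ _) h)⟩
    rw [this, Finset.card_image_of_injOn, Finset.card_compl]
    · have := Finset.card_le_univ R
      omega
    · intro x hx y hy hxy
      simp only [Finset.coe_compl, Set.mem_compl_iff, Finset.mem_coe] at hx hy
      have : x ∈ insert y R := by rw [← show insert x R = insert y R from hxy]; simp
      rw [Finset.mem_insert] at this
      tauto
  · rw [Finset.card_eq_one]
    refine ⟨R, ?_⟩
    ext R'
    rw [mem_Rs hk, Finset.mem_singleton]
    constructor
    · rintro ⟨hR', hd'⟩
      by_contra hne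
      have hns : ¬ R ⊆ R' := fun h => hne (Finset.eq_of_subset_of_card_le h (by omega)).symm
      obtain ⟨r, hr, hr'⟩ := Finset.not_subset.1 hns
      obtain ⟨x, hx⟩ : ((insert r R')ᶜ).Nonempty := by
        rw [← Finset.card_pos, Finset.card_compl, Finset.card_insert_of_notMem hr']
        omega
      simp only [Finset.mem_compl, Finset.mem_insert, not_or] at hx
      have : insert x R' ∈ Bs F v := by
        rw [mem_Bs, Finset.card_insert_of_notMem hx.2]
        exact ⟨hR', fun h => hd' (LI_mono (Finset.subset_insert _ _) h)⟩
      have := key _ this hr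
      rw [Finset.mem_insert] at this
      rcases this with h | h
      · exact hx.1 h.symm
      · exact hr' h
    · rintro rfl
      exact ⟨hR, hdep⟩
  · rw [Finset.card_eq_zero, Finset.eq_empty_iff_forall_notMem]
    intro W hW
    rw [mem_Ws] at hW
    obtain ⟨r, hr⟩ : R.Nonempty := by rw [← Finset.card_pos]; omega
    have hc : finrank F V ≤ (W.erase r).card := by
      have := Finset.pred_card_le_card_erase (s := W) (a := r)
      omega
    obtain ⟨S, hS, hSc⟩ := Finset.exists_subset_card_eq hc
    have hSB := mem_Bs.2 ⟨hSc, hW.2 S (hS.trans (Finset.erase_subset _ _)) hSc⟩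
    have := hS (key S hSB hr)
    simp at this
  · rw [Finset.card_eq_zero, Finset.eq_empty_iff_forall_notMem]
    rintro ⟨S, T⟩ hST
    rw [mem_Fs] at hST
    have := Finset.card_le_card (Finset.subset_inter (key S hST.1) (key T hST.2.1))
    omega

theorem caseB (hk : 2 ≤ finrank F V) (v : ι → V)
    (h3 : ∀ S T U, ¬ E3 F v S T U) (hQ : QQ F v) :
    (Rs F v).card = 0 ∧
    (((Bs F v).card ≤ 1 ∧ (Ws F v).card = 0 ∧ (Fs F v).card = 0) ∨
     ((Bs F v).card = 2 ∧ (Ws F v).card = 0 ∧ (Fs F v).card = 2) ∨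
     ((Bs F v).card = finrank F V + 1 ∧ (Ws F v).card = 1 ∧ (Fs F v).card = 0)) := by
  have hW0 : (Bs F v).card ≤ 2 → (Ws F v).card = 0 := by
    intro h
    rw [Finset.card_eq_zero, Finset.eq_empty_iff_forall_notMem]
    intro W hW
    have := WW_card hW
    omega
  constructor
  · rw [Finset.card_eq_zero, Finset.eq_empty_iff_forall_notMem]
    intro R hR
    rw [mem_Rs hk] at hR
    exact hR.2 (hQ R hR.1)
  by_cases h1 : (Bs F v).card ≤ 1
  · left
    refine ⟨h1, hW0 (by omega), ?_⟩
    rw [Finset.card_eq_zero, Finset.eq_empty_iff_forall_notMem]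
    rintro ⟨S, T⟩ hST
    rw [mem_Fs] at hST
    have := Finset.card_le_one.1 h1 S hST.1 T hST.2.1
    subst this
    have := (mem_Bs.1 hST.1).1
    rw [Finset.inter_self] at hST
    omega
  right
  obtain ⟨S, hS, T, hT, hST⟩ := Finset.one_lt_card.1 (not_le.1 h1)
  have hS' := mem_Bs.1 hS
  have hT' := mem_Bs.1 hT
  have hcup := Finset.card_union_add_card_inter S T
  have third : ∀ U ∈ Bs F v, U ≠ S → U ≠ T →
      ∃ W : Finset ι, W.card = finrank F V + 1 ∧ S ⊆ W ∧ T ⊆ W ∧ U ⊆ W := by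
    intro U hU h1 h2
    have hU' := mem_Bs.1 hU
    by_contra hc
    exact h3 S T U ⟨⟨hS'.1, hT'.1, hU'.1, hST, h1.symm, h2.symm, hc⟩, hQ, hS'.2, hT'.2, hU'.2⟩
  by_cases hf : (S ∩ T).card + 2 ≤ finrank F V
  · left
    have hB : Bs F v = {S, T} := by
      ext U
      simp only [Finset.mem_insert, Finset.mem_singleton]
      constructor
      · intro hU
        by_contra hc
        rw [not_or] at hc
        obtain ⟨W, hW, a, b, -⟩ := third U hU hc.1 hc.2
        have := Finset.card_le_card (Finset.union_subset a b)
        omega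
      · rintro (rfl | rfl) <;> assumption
    have hB2 : (Bs F v).card = 2 := by rw [hB, Finset.card_pair hST]
    refine ⟨hB2, hW0 hB2.le, ?_⟩
    have : Fs F v = {(S, T), (T, S)} := by
      ext ⟨A, B⟩
      rw [mem_Fs, hB]
      simp only [Finset.mem_insert, Finset.mem_singleton, Prod.mk.injEq]
      constructor
      · rintro ⟨rfl | rfl, rfl | rfl, h⟩
        · rw [Finset.inter_self] at h; omega
        · simp
        · simp
        · rw [Finset.inter_self] at h; omega
      · rintro (⟨rfl, rfl⟩ | ⟨rfl, rfl⟩)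
        · simp [hf]
        · rw [Finset.inter_comm]; simp [hf]
    rw [this, Finset.card_pair]
    simp [hST]
  · right
    have hlt : (S ∩ T).card < S.card := by
      apply Finset.card_lt_card
      refine ⟨Finset.inter_subset_left, fun h => hST ?_⟩
      exact Finset.eq_of_subset_of_card_le (h.trans Finset.inter_subset_right) (by omega)
    have hI : (S ∩ T).card + 1 = finrank F V := by omega
    have hW : (S ∪ T).card = finrank F V + 1 := by omega
    have hLI := hQ _ hI
    have mm : ∀ A ∈ Bs F v, S ∩ T ⊆ A → ∀ i ∈ A, v i ∈ sp F v (S ∩ T) := by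
      intro A hA hsub i hi
      by_cases hi' : i ∈ S ∩ T
      · exact mem_sp hi' v
      · by_contra hc
        have hA' := mem_Bs.1 hA
        apply hA'.2
        have : A = insert i (S ∩ T) := by
          symm
          apply Finset.eq_of_subset_of_card_le (Finset.insert_subset hi hsub)
          rw [Finset.card_insert_of_notMem hi']
          omega
        rw [this, LI_insert hi']
        exact ⟨hLI, hc⟩
    have hWW : WW F v (S ∪ T) := by
      apply WW_of (S ∪ T) (S ∩ T) v hLI hI
      intro i hi
      rcases Finset.mem_union.1 hi with h | h
      · exact mm S hS Finset.inter_subset_left i h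
      · exact mm T hT Finset.inter_subset_right i h
    have hB : Bs F v = Finset.powersetCard (finrank F V) (S ∪ T) := by
      apply Finset.Subset.antisymm _ (WW_sub hWW)
      intro U hU
      rw [Finset.mem_powersetCard]
      refine ⟨?_, (mem_Bs.1 hU).1⟩
      by_cases h1 : U = S
      · rw [h1]; exact Finset.subset_union_left
      by_cases h2 : U = T
      · rw [h2]; exact Finset.subset_union_right
      obtain ⟨W, hWc, a, b, c⟩ := third U hU h1 h2
      have := Finset.eq_of_subset_of_card_le (Finset.union_subset a b) (by omega)
      rw [this]; exact c
    refine ⟨?_, ?_, ?_⟩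
    · rw [hB, Finset.card_powersetCard, hW, Nat.choose_succ_self_right]
    · rw [Finset.card_eq_one]
      refine ⟨S ∪ T, ?_⟩
      ext W'
      rw [mem_Ws, Finset.mem_singleton]
      constructor
      · rintro ⟨hc, hw⟩
        apply Finset.eq_of_subset_of_card_le _ (by omega)
        intro x hx
        obtain ⟨A, hA1, hA2, hA3⟩ := Finset.exists_subsuperset_card_eq
          (Finset.singleton_subset_iff.2 hx) (n := finrank F V) (by simp; omega) (by omega)
        have : A ∈ Bs F v := mem_Bs.2 ⟨hA3, hw A hA2 hA3⟩
        rw [hB, Finset.mem_powersetCard] at this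
        exact this.1 (hA1 (by simp))
      · rintro rfl
        exact ⟨hW, hWW⟩
    · rw [Finset.card_eq_zero, Finset.eq_empty_iff_forall_notMem]
      rintro ⟨A, B⟩ hAB
      rw [mem_Fs, hB, Finset.mem_powersetCard, Finset.mem_powersetCard] at hAB
      have h1 := Finset.card_le_card (Finset.union_subset hAB.1.1 hAB.2.1.1)
      have h2 := Finset.card_union_add_card_inter A B
      omega

open Classical in
theorem pointwise (hk : 2 ≤ finrank F V) (hn : finrank F V < Fintype.card ι) (v : ι → V)
    (h2 : ∀ R S, ¬ E2 F v R S) (h3 : ∀ S T U, ¬ E3 F v S T U) :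
    (if (Bs F v).card = 0 then (1 : ℝ) else 0) = 1 - (Bs F v).card
      + ((Fintype.card ι : ℝ) - finrank F V) * (Rs F v).card + finrank F V * (Ws F v).card
      + (Fs F v).card / 2 := by
  by_cases hQ : QQ F v
  · obtain ⟨hr, h | h | h⟩ := caseB hk v h3 hQ
    · obtain ⟨a, b, c⟩ := h
      rw [hr, b, c]
      interval_cases (Bs F v).card <;> simp
    · obtain ⟨a, b, c⟩ := h
      rw [hr, a, b, c]
      norm_num
    · obtain ⟨a, b, c⟩ := h
      rw [hr, a, b, c]
      simp
  · unfold QQ at hQ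
    push Not at hQ
    obtain ⟨R, hR, hd⟩ := hQ
    obtain ⟨a, b, c, d⟩ := caseA hk hn v h2 R hR hd
    rw [b, c, d]
    have h0 : (Bs F v).card ≠ 0 := by omega
    have : ((Bs F v).card : ℝ) + finrank F V = Fintype.card ι + 1 := by exact_mod_cast a
    simp only [h0, if_false]
    push_cast
    linarith

end Comb
end Kaipa

namespace Kaipa
open Function Module

theorem sum_close {α : Type} (s : Finset α) (p : α → ℝ) (x e : ℝ)
    (h : ∀ a ∈ s, |p a - x| ≤ e) : |∑ a ∈ s, p a - s.card * x| ≤ s.card * e := by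
  have : ∑ a ∈ s, p a - s.card * x = ∑ a ∈ s, (p a - x) := by
    rw [Finset.sum_sub_distrib]; simp
  rw [this]
  refine (Finset.abs_sum_le_sum_abs _ _).trans ?_
  refine (Finset.sum_le_sum h).trans ?_
  simp

section Main
set_option linter.unusedSectionVars false
variable {F V ι : Type} [Field F] [Fintype F] [AddCommGroup V] [Module F V] [Fintype V]
  [Fintype ι] [DecidableEq ι]

theorem Ex_filter {α : Type} (s : Finset α) (p : α → (ι → V) → Prop)
    [∀ v, DecidablePred (fun a => p a v)] :
    Ex (fun v : ι → V => ((s.filter (fun a => p a v)).card : ℝ)) = ∑ a ∈ s, Pr (p a) := by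
  classical
  unfold Pr
  rw [← Ex_sum]
  congr 1
  ext v
  rw [Finset.card_filter]
  push_cast
  apply Finset.sum_congr rfl
  intro a _
  congr

theorem Ex_Bs (hk : 2 ≤ finrank F V) :
    |Ex (fun v : ι → V => ((Bs F v).card : ℝ)) -
      ((Fintype.card ι).choose (finrank F V)) * (tt F + tt F ^ 2)| ≤
      ((Fintype.card ι).choose (finrank F V)) * (2 * finrank F V * tt F ^ 3) := by
  classical
  unfold Bs
  rw [Ex_filter]
  have := sum_close (Finset.powersetCard (finrank F V) (Finset.univ : Finset ι))
    (fun S => Pr (fun v : ι → V => ¬ LI F v S)) (tt F + tt F ^ 2) (2 * finrank F V * tt F ^ 3)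
    (fun S hS => S_asym S (Finset.mem_powersetCard.1 hS).2 hk)
  rwa [Finset.card_powersetCard] at this

theorem Ex_Rs (hk : 2 ≤ finrank F V) :
    |Ex (fun v : ι → V => ((Rs F v).card : ℝ)) -
      ((Fintype.card ι).choose (finrank F V - 1)) * tt F ^ 2| ≤
      ((Fintype.card ι).choose (finrank F V - 1)) * (finrank F V * tt F ^ 3) := by
  classical
  unfold Rs
  rw [Ex_filter]
  have := sum_close (Finset.powersetCard (finrank F V - 1) (Finset.univ : Finset ι))
    (fun S => Pr (fun v : ι → V => ¬ LI F v S)) (tt F ^ 2) (finrank F V * tt F ^ 3)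
    (fun S hS => R_asym S (by have := (Finset.mem_powersetCard.1 hS).2; omega) hk)
  rwa [Finset.card_powersetCard] at this

theorem Ex_Ws (hk : 2 ≤ finrank F V) :
    |Ex (fun v : ι → V => ((Ws F v).card : ℝ)) -
      ((Fintype.card ι).choose (finrank F V + 1)) * tt F ^ 2| ≤
      ((Fintype.card ι).choose (finrank F V + 1)) * (3 * finrank F V * tt F ^ 3) := by
  classical
  unfold Ws
  rw [Ex_filter]
  have := sum_close (Finset.powersetCard (finrank F V + 1) (Finset.univ : Finset ι))
    (fun S => Pr (fun v : ι → V => WW F v S)) (tt F ^ 2) (3 * finrank F V * tt F ^ 3)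
    (fun S hS => W_asym S (Finset.mem_powersetCard.1 hS).2 hk)
  rwa [Finset.card_powersetCard] at this

theorem Ex_Fs :
    |Ex (fun v : ι → V => ((Fs F v).card : ℝ)) - (far ι (finrank F V)).card * tt F ^ 2| ≤
      (far ι (finrank F V)).card * (5 * finrank F V * tt F ^ 3) := by
  classical
  unfold Fs
  rw [Ex_filter]
  exact sum_close (far ι (finrank F V))
    (fun p => Pr (fun v : ι → V => ¬ LI F v p.1 ∧ ¬ LI F v p.2)) (tt F ^ 2)
      (5 * finrank F V * tt F ^ 3)
    (fun p hp => by
      have := mem_far.1 (show (p.1, p.2) ∈ _ from hp)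
      exact far_asym p.1 p.2 this.1 this.2.1 this.2.2)

/-- exceptional event -/
def EE (F : Type) {V ι : Type} [Field F] [AddCommGroup V] [Module F V] (v : ι → V) : Prop :=
  (∃ R S, E2 F v R S) ∨ ∃ S T U, E3 F v S T U

theorem Pr_false : Pr (fun _ : ι → V => False) = 0 := by simp [Pr, Ex]

theorem Pr_EE : Pr (fun v : ι → V => EE F v) ≤
    (4 ^ Fintype.card ι + 8 ^ Fintype.card ι) * (2 * finrank F V * tt F ^ 3) := by
  have ht := tt_pos (F := F)
  have hp : 0 ≤ 2 * finrank F V * tt F ^ 3 := by positivity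
  refine (Pr_or_le _ _).trans ?_
  rw [add_mul]
  apply add_le_add
  · have h1 := Pr_exists_le (Finset.univ : Finset (Finset ι × Finset ι))
      (fun p (v : ι → V) => E2 F v p.1 p.2)
    refine (Pr_mono ?_).trans (h1.trans ?_)
    · rintro v ⟨R, S, h⟩
      exact ⟨(R, S), Finset.mem_univ _, h⟩
    · refine (Finset.sum_le_card_nsmul _ _ (2 * finrank F V * tt F ^ 3) ?_).trans ?_
      · rintro ⟨R, S⟩ -
        by_cases h : R.card + 1 = finrank F V ∧ S.card = finrank F V ∧ ¬ R ⊆ S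
        · simp only [E2, h, true_and, not_false_eq_true]
          exact E2_le R S h.1 h.2.1 h.2.2
        · simp only [E2, h, false_and]
          rwa [Pr_false]
      · simp only [Finset.card_univ, Fintype.card_prod, Fintype.card_finset, nsmul_eq_mul]
        rw [show (4:ℝ) = 2 * 2 by norm_num, mul_pow]
        push_cast
        exact le_rfl
  · have h1 := Pr_exists_le (Finset.univ : Finset (Finset ι × Finset ι × Finset ι))
      (fun p (v : ι → V) => E3 F v p.1 p.2.1 p.2.2)
    refine (Pr_mono ?_).trans (h1.trans ?_)
    · rintro v ⟨R, S, T, h⟩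
      exact ⟨(R, S, T), Finset.mem_univ _, h⟩
    · refine (Finset.sum_le_card_nsmul _ _ (2 * finrank F V * tt F ^ 3) ?_).trans ?_
      · rintro ⟨S, T, U⟩ -
        by_cases h : (S.card = finrank F V ∧ T.card = finrank F V ∧ U.card = finrank F V ∧
            S ≠ T ∧ S ≠ U ∧ T ≠ U ∧
            ¬ ∃ W : Finset ι, W.card = finrank F V + 1 ∧ S ⊆ W ∧ T ⊆ W ∧ U ⊆ W)
        · refine (Pr_mono (fun v hv => hv.2)).trans ?_
          obtain ⟨h1, h2, h3, h4, h5, h6, h7⟩ := h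
          exact E3_le S T U h1 h2 h3 h4 h5 h6 h7
        · refine (Pr_mono (r := fun _ => False) (fun v hv => h hv.1)).trans ?_
          rwa [Pr_false]
      · simp only [Finset.card_univ, Fintype.card_prod, Fintype.card_finset, nsmul_eq_mul]
        rw [show (8:ℝ) = 2 * (2 * 2) by norm_num, mul_pow, mul_pow]
        push_cast
        exact le_rfl

/-- crude bound -/
noncomputable def K0 (n k : ℕ) : ℝ := 2 + 2 ^ n + (n + k) * 2 ^ n + k * 2 ^ n + 4 ^ n

theorem pointwise' (hk : 2 ≤ finrank F V) (hn : finrank F V < Fintype.card ι) (v : ι → V)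
    [Decidable ((Bs F v).card = 0)] [Decidable (EE F v)] :
    |(if (Bs F v).card = 0 then (1 : ℝ) else 0) - (1 - (Bs F v).card
      + ((Fintype.card ι : ℝ) - finrank F V) * (Rs F v).card + finrank F V * (Ws F v).card
      + 1 / 2 * (Fs F v).card)| ≤ K0 (Fintype.card ι) (finrank F V) * if EE F v then 1 else 0 := by
  classical
  by_cases h : EE F v
  · simp only [h, if_true]
    have b1 : ((Bs F v).card : ℝ) ≤ 2 ^ Fintype.card ι := by
      have := Finset.card_le_univ (Bs F v)
      rw [Fintype.card_finset] at this
      exact_mod_cast this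
    have b2 : ((Rs F v).card : ℝ) ≤ 2 ^ Fintype.card ι := by
      have := Finset.card_le_univ (Rs F v)
      rw [Fintype.card_finset] at this
      exact_mod_cast this
    have b3 : ((Ws F v).card : ℝ) ≤ 2 ^ Fintype.card ι := by
      have := Finset.card_le_univ (Ws F v)
      rw [Fintype.card_finset] at this
      exact_mod_cast this
    have b4 : ((Fs F v).card : ℝ) ≤ 4 ^ Fintype.card ι := by
      have := Finset.card_le_univ (Fs F v)
      rw [Fintype.card_prod, Fintype.card_finset, ← mul_pow] at this
      exact_mod_cast this
    have c1 : (0:ℝ) ≤ (Bs F v).card := by positivity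
    have c2 : (0:ℝ) ≤ (Rs F v).card := by positivity
    have c3 : (0:ℝ) ≤ (Ws F v).card := by positivity
    have c4 : (0:ℝ) ≤ (Fs F v).card := by positivity
    have e0 : (0:ℝ) ≤ (if (Bs F v).card = 0 then (1 : ℝ) else 0) := by split_ifs <;> norm_num
    have e1 : (if (Bs F v).card = 0 then (1 : ℝ) else 0) ≤ 1 := by split_ifs <;> norm_num
    have hnk : (finrank F V : ℝ) < Fintype.card ι := by exact_mod_cast hn
    have d2 : ((Fintype.card ι : ℝ) - finrank F V) * (Rs F v).card ≤
        ((Fintype.card ι : ℝ) + finrank F V) * 2 ^ Fintype.card ι := by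
      gcongr
      linarith [show (0:ℝ) ≤ finrank F V by positivity]
    have d2' : 0 ≤ ((Fintype.card ι : ℝ) - finrank F V) * (Rs F v).card :=
      mul_nonneg (by linarith) c2
    have d3 : (finrank F V : ℝ) * (Ws F v).card ≤ finrank F V * 2 ^ Fintype.card ι := by gcongr
    have d3' : 0 ≤ (finrank F V : ℝ) * (Ws F v).card := by positivity
    unfold K0
    rw [abs_le]
    constructor <;> linarith
  · simp only [h, if_false, mul_zero]
    unfold EE at h
    push Not at h
    have := pointwise hk hn v h.1 h.2
    rw [abs_nonpos_iff, sub_eq_zero]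
    convert this using 2
    ring

/-- the quadratic coefficient -/
noncomputable def MM (ι : Type) [Fintype ι] [DecidableEq ι] (k : ℕ) : ℝ :=
  ((Fintype.card ι : ℝ) - k) * (Fintype.card ι).choose (k - 1)
    + k * (Fintype.card ι).choose (k + 1) + 1 / 2 * (far ι k).card

/-- the error constant -/
noncomputable def C0 (ι : Type) [Fintype ι] [DecidableEq ι] (k : ℕ) : ℝ :=
  K0 (Fintype.card ι) k * ((4 ^ Fintype.card ι + 8 ^ Fintype.card ι) * (2 * k))
    + (Fintype.card ι).choose k * (2 * k)
    + ((Fintype.card ι : ℝ) - k) * ((Fintype.card ι).choose (k - 1) * k)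
    + k * ((Fintype.card ι).choose (k + 1) * (3 * k)) + 1 / 2 * ((far ι k).card * (5 * k))

theorem good_asym (hk : 2 ≤ finrank F V) (hn : finrank F V < Fintype.card ι) :
    |Pr (fun v : ι → V => ∀ S : Finset ι, S.card = finrank F V → LI F v S) -
      (1 - ((Fintype.card ι).choose (finrank F V)) * (tt F + tt F ^ 2)
        + MM ι (finrank F V) * tt F ^ 2)| ≤ C0 ι (finrank F V) * tt F ^ 3 := by
  classical
  have hG : Pr (fun v : ι → V => ∀ S : Finset ι, S.card = finrank F V → LI F v S) =
      Ex (fun v : ι → V => if (Bs F v).card = 0 then (1 : ℝ) else 0) := by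
    have : Pr (fun v : ι → V => ∀ S : Finset ι, S.card = finrank F V → LI F v S) =
      Pr (fun v : ι → V => (Bs F v).card = 0) := by
      apply Pr_congr
      intro v
      rw [Finset.card_eq_zero, Finset.eq_empty_iff_forall_notMem]
      simp only [mem_Bs, not_and, not_not]
    rw [this, Pr]
    congr 1
    ext v
    congr
  have h1 : |Ex (fun v : ι → V => (if (Bs F v).card = 0 then (1 : ℝ) else 0) - (1 - (Bs F v).card
      + ((Fintype.card ι : ℝ) - finrank F V) * (Rs F v).card + finrank F V * (Ws F v).card
      + 1 / 2 * (Fs F v).card))| ≤ K0 (Fintype.card ι) (finrank F V) * Pr (fun v : ι → V => EE F v) := by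
    refine (Ex_abs _).trans ?_
    rw [Pr, ← Ex_const_mul]
    apply Ex_mono
    intro v
    exact pointwise' hk hn v
  rw [Ex_sub, Ex_add, Ex_add, Ex_add, Ex_sub, Ex_one, Ex_const_mul, Ex_const_mul, Ex_const_mul,
    ← hG] at h1
  have hnk : (finrank F V : ℝ) < Fintype.card ι := by exact_mod_cast hn
  have hK : 0 ≤ K0 (Fintype.card ι) (finrank F V) := by unfold K0; positivity
  have h2 := mul_le_mul_of_nonneg_left (Pr_EE (F := F) (V := V) (ι := ι)) hK
  have h3 := Ex_Bs (ι := ι) hk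
  have h4 := mul_le_mul_of_nonneg_left (Ex_Rs (ι := ι) hk) (sub_nonneg.2 hnk.le)
  have h5 := mul_le_mul_of_nonneg_left (Ex_Ws (ι := ι) hk) (show (0:ℝ) ≤ finrank F V by positivity)
  have h6 := mul_le_mul_of_nonneg_left (Ex_Fs (F := F) (V := V) (ι := ι)) (show (0:ℝ) ≤ 1 / 2 by norm_num)
  rw [← abs_of_nonneg (sub_nonneg.2 hnk.le), ← abs_mul, abs_of_nonneg (sub_nonneg.2 hnk.le)] at h4
  rw [← Nat.abs_cast (finrank F V), ← abs_mul, Nat.abs_cast] at h5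
  rw [← abs_of_nonneg (show (0:ℝ) ≤ 1 / 2 by norm_num), ← abs_mul, abs_of_nonneg (show (0:ℝ) ≤ 1 / 2 by norm_num)] at h6
  unfold MM C0
  rw [abs_le] at *
  constructor <;> linarith

theorem adj_card (k : ℕ) (S : Finset ι) (hS : S.card = k) :
    ((Finset.powersetCard k (Finset.univ : Finset ι)).filter
      (fun T => (S ∩ T).card + 1 = k)).card = k * (Fintype.card ι - k) := by
  have : (Finset.powersetCard k (Finset.univ : Finset ι)).filter
      (fun T => (S ∩ T).card + 1 = k) = (S ×ˢ Sᶜ).image (fun p => insert p.2 (S.erase p.1)) := by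
    ext T
    simp only [Finset.mem_filter, Finset.mem_powersetCard, Finset.subset_univ, true_and,
      Finset.mem_image, Finset.mem_product, Finset.mem_compl, Prod.exists]
    constructor
    · rintro ⟨hT, hI⟩
      have c1 := Finset.card_sdiff_add_card_inter S T
      have c2 := Finset.card_sdiff_add_card_inter T S
      rw [Finset.inter_comm T S] at c2
      obtain ⟨a, ha⟩ := Finset.card_eq_one.1 (show (S \ T).card = 1 by omega)
      obtain ⟨b, hb⟩ := Finset.card_eq_one.1 (show (T \ S).card = 1 by omega)
      have ha' : a ∈ S \ T := by rw [ha]; simp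
      have hb' : b ∈ T \ S := by rw [hb]; simp
      rw [Finset.mem_sdiff] at ha' hb'
      refine ⟨a, b, ⟨ha'.1, hb'.2⟩, ?_⟩
      have hca := Finset.card_erase_add_one ha'.1
      symm
      apply Finset.eq_of_subset_of_card_le
      · intro x hx
        by_cases hxS : x ∈ S
        · have : x ≠ a := by rintro rfl; exact ha'.2 hx
          simp [this, hxS]
        · have : x ∈ T \ S := Finset.mem_sdiff.2 ⟨hx, hxS⟩
          rw [hb, Finset.mem_singleton] at this
          simp [this]
      · rw [Finset.card_insert_of_notMem (by simp [hb'.2])]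
        omega
    · rintro ⟨a, b, ⟨ha, hb⟩, rfl⟩
      have hca := Finset.card_erase_add_one ha
      constructor
      · rw [Finset.card_insert_of_notMem (by simp [hb])]
        omega
      · rw [Finset.inter_insert_of_notMem hb, Finset.inter_eq_right.2 (Finset.erase_subset _ _)]
        omega
  rw [this, Finset.card_image_of_injOn, Finset.card_product, Finset.card_compl, hS]
  rintro ⟨a, b⟩ h ⟨a', b'⟩ h' hh
  simp only [Finset.coe_product, Set.mem_prod, Finset.mem_coe, Finset.mem_compl,
    Finset.coe_compl, Set.mem_compl_iff] at h h'
  have hh : insert b (S.erase a) = insert b' (S.erase a') := hh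
  have e1 : b ∈ insert b' (S.erase a') := by rw [← hh]; simp
  have e2 : a ∉ insert b' (S.erase a') := by
    rw [← hh]
    simp only [Finset.mem_insert, Finset.mem_erase, ne_eq, not_true_eq_false, false_and, or_false]
    rintro rfl
    exact h.2 h.1
  simp only [Finset.mem_insert, Finset.mem_erase, not_or, not_and] at e1 e2
  have : b = b' := by
    rcases e1 with e | e
    · exact e
    · exact absurd e.2 h.2
  have : a = a' := by
    by_contra hc
    exact e2.2 hc h.1
  simp [*]

theorem far_card (k : ℕ) (hk : 2 ≤ k) (hn : k < Fintype.card ι) :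
    (far ι k).card + (Fintype.card ι).choose k * (1 + k * (Fintype.card ι - k)) =
      (Fintype.card ι).choose k * (Fintype.card ι).choose k := by
  unfold far
  rw [Finset.card_filter, Finset.sum_product]
  simp_rw [← Finset.card_filter]
  have key : ∀ S ∈ Finset.powersetCard k (Finset.univ : Finset ι),
      ((Finset.powersetCard k (Finset.univ : Finset ι)).filter
        (fun T => (S ∩ T).card + 2 ≤ k)).card + (1 + k * (Fintype.card ι - k)) =
        (Fintype.card ι).choose k := by
    intro S hS
    have hS' := (Finset.mem_powersetCard.1 hS).2
    rw [← adj_card k S hS', ← Finset.card_univ, ← Finset.card_powersetCard]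
    have h1 := Finset.card_filter_add_card_filter_not
      (s := Finset.powersetCard k (Finset.univ : Finset ι)) (fun T => (S ∩ T).card + 2 ≤ k)
    rw [← h1]
    congr 1
    have h2 : (Finset.powersetCard k (Finset.univ : Finset ι)).filter
        (fun T => ¬ (S ∩ T).card + 2 ≤ k) = insert S ((Finset.powersetCard k
          (Finset.univ : Finset ι)).filter (fun T => (S ∩ T).card + 1 = k)) := by
      ext T
      simp only [Finset.mem_filter, Finset.mem_powersetCard, Finset.subset_univ, true_and,
        Finset.mem_insert]
      constructor
      · rintro ⟨a, b⟩
        by_cases hST : T = S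
        · exact Or.inl hST
        · right
          refine ⟨a, ?_⟩
          have hlt : (S ∩ T).card < S.card := by
            apply Finset.card_lt_card
            refine ⟨Finset.inter_subset_left, fun h => hST ?_⟩
            exact (Finset.eq_of_subset_of_card_le (h.trans Finset.inter_subset_right) (by omega)).symm
          omega
      · rintro (rfl | ⟨a, b⟩)
        · rw [Finset.inter_self]; omega
        · omega
    rw [h2, Finset.card_insert_of_notMem, add_comm]
    simp only [Finset.mem_filter, Finset.inter_self]
    omega
  have h3 := Finset.sum_congr rfl key
  rw [Finset.sum_add_distrib] at h3
  simpa [Finset.card_powersetCard] using h3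

theorem MM_eq (k : ℕ) (hk : 2 ≤ k) (hn : k < Fintype.card ι) (n N δ : ℝ)
    (e1 : n = Fintype.card ι) (e2 : N = (Fintype.card ι).choose k) (e3 : δ = k * (n - k)) :
    MM ι k = (N ^ 2 - N) / 2 - N * δ * (δ - n - 3) / (2 * (δ + n + 1)) := by
  have h1 := far_card (ι := ι) k hk hn
  have h2 := Nat.choose_succ_right_eq (Fintype.card ι) k
  have h3 := Nat.choose_succ_right_eq (Fintype.card ι) (k - 1)
  rw [Nat.sub_add_cancel (by omega)] at h3
  have hc : ((Fintype.card ι - k : ℕ) : ℝ) = n - k := by rw [Nat.cast_sub hn.le, e1]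
  have hc2 : ((Fintype.card ι - (k - 1) : ℕ) : ℝ) = n - k + 1 := by
    rw [show Fintype.card ι - (k - 1) = (Fintype.card ι - k) + 1 by omega]
    push_cast [hc]; ring
  have hkn : (k : ℝ) < n := by rw [e1]; exact_mod_cast hn
  have hk' : (2 : ℝ) ≤ k := by exact_mod_cast hk
  apply_fun (fun x : ℕ => (x : ℝ)) at h1 h2 h3
  push_cast [hc, hc2] at h1 h2 h3
  rw [← e2] at h1 h2 h3
  unfold MM
  rw [← e1]
  have f : ((far ι k).card : ℝ) = N * N - N * (1 + k * (n - k)) := by linarith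
  have g2 : (((Fintype.card ι).choose (k + 1) : ℕ) : ℝ) = N * (n - k) / (k + 1) := by
    rw [eq_div_iff (by linarith)]; exact h2
  have g3 : (((Fintype.card ι).choose (k - 1) : ℕ) : ℝ) = N * k / (n - k + 1) := by
    rw [eq_div_iff (by linarith)]; exact h3.symm
  rw [f, g2, g3, e3]
  have hd : (k : ℝ) * (n - k) + n + 1 = (n - k + 1) * (k + 1) := by ring
  rw [hd]
  have n1 : n - k + 1 ≠ 0 := by linarith
  have n2 : (k : ℝ) + 1 ≠ 0 := by linarith
  field_simp
  ring

end Main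
end Kaipa

namespace Kaipa
open Function Module

theorem bounded_cont (r : ℝ → ℝ) (h : Continuous r) :
    ∃ C : ℝ, 0 ≤ C ∧ ∀ t : ℝ, 0 ≤ t → t ≤ 1 → |r t| ≤ C := by
  obtain ⟨C, hC⟩ := isCompact_Icc (a := (0:ℝ)) (b := 1) |>.exists_bound_of_continuousOn
    h.continuousOn
  refine ⟨C, ?_, fun t h0 h1 => hC t ⟨h0, h1⟩⟩
  exact (norm_nonneg _).trans (hC 0 ⟨le_rfl, zero_le_one⟩)

theorem pow_exp (m : ℕ) : ∃ C : ℝ, 0 ≤ C ∧ ∀ t : ℝ, 0 ≤ t → t ≤ 1 →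
    |(1 - t) ^ m - (1 - m * t + m * (m - 1) / 2 * t ^ 2)| ≤ C * t ^ 3 := by
  induction m with
  | zero => exact ⟨0, le_rfl, fun t _ _ => by simp⟩
  | succ m ih =>
    obtain ⟨C, hC0, hC⟩ := ih
    refine ⟨C + |(m:ℝ) * (m - 1) / 2|, by positivity, fun t h0 h1 => ?_⟩
    have h := hC t h0 h1
    have e : (1 - t) ^ (m + 1) - (1 - ((m + 1 : ℕ):ℝ) * t + ((m + 1 : ℕ):ℝ) * (((m + 1 : ℕ):ℝ) - 1) / 2 * t ^ 2)
      = ((1 - t) ^ m - (1 - m * t + m * (m - 1) / 2 * t ^ 2)) * (1 - t)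
        - (m:ℝ) * (m - 1) / 2 * t ^ 3 := by push_cast; ring
    rw [e]
    refine (abs_sub _ _).trans ?_
    rw [abs_mul, abs_mul, abs_of_nonneg (show 0 ≤ 1 - t by linarith), abs_of_nonneg (show 0 ≤ t ^ 3 by positivity),
      add_mul]
    apply add_le_add _ le_rfl
    calc _ ≤ (C * t ^ 3) * 1 := mul_le_mul h (by linarith) (by linarith) (by positivity)
      _ = _ := by ring

theorem analytic (m : ℕ) (N M C : ℝ) (hC : 0 ≤ C) : ∃ C' t0 : ℝ, 0 < t0 ∧ ∀ t P g : ℝ, 0 < t → t ≤ t0 →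
    |P - (1 - N * (t + t ^ 2) + M * t ^ 2)| ≤ C * t ^ 3 → |g - (1 - t - t ^ 2)| ≤ C * t ^ 3 →
    |P / (g * (1 - t) ^ m) - (1 - (N - (m + 1)) * t +
      (M - N - N * (m + 1) + (m + 1) * m / 2 + (m + 1) + 1) * t ^ 2)| ≤ C' * t ^ 3 := by
  set b := M - N - N * (m + 1) + (m + 1) * m / 2 + (m + 1) + 1 with hb
  obtain ⟨Cm, hCm0, hCm⟩ := pow_exp m
  obtain ⟨CL, hCL0, hCL⟩ := bounded_cont (fun t => 1 - (N - (m + 1)) * t + b * t ^ 2) (by fun_prop)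
  set s1 : ℝ := -m with hs1
  set s2 : ℝ := m * (m - 1) / 2 with hs2
  set l1 : ℝ := -(N - (m + 1)) with hl1
  obtain ⟨Cr, hCr0, hCr⟩ := bounded_cont (fun t => 
    ((-s2 - s1) + (s2 - s1 - 1) * l1 + (s1 - 1) * b) + (-s2 + (-s2 - s1) * l1 + (s2 - s1 - 1) * b) * t
    + (-s2 * l1 + (-s2 - s1) * b) * t ^ 2 + (-s2 * b) * t ^ 3) (by fun_prop)
  refine ⟨4 * (C + Cr + (C + Cm) * CL), min (1 / 4) (min (1 / (2 * (m + 1))) (1 / (C + 1))),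
    by positivity, ?_⟩
  intro t P g ht0 ht hP hg
  rw [le_min_iff, le_min_iff] at ht
  obtain ⟨ht1, ht2, ht3⟩ := ht
  rw [le_div_iff₀ (by positivity)] at ht2 ht3
  have he := hCm t ht0.le (by linarith)
  have hL := hCL t ht0.le (by linarith)
  have hr := hCr t ht0.le (by linarith)
  set L := 1 - (N - (m + 1)) * t + b * t ^ 2 with hLdef
  set e := (1 - t) ^ m with hedef
  have hp3 : 0 < t ^ 3 := by positivity
  have he1 : e ≤ 1 := pow_le_one₀ (by linarith) (by linarith)
  have he0 : 1 / 2 ≤ e := by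
    have := one_add_mul_le_pow (a := -t) (by linarith) m
    rw [← sub_eq_add_neg] at this
    nlinarith
  have hg0 : 1 / 2 ≤ g := by
    rw [abs_le] at hg
    have : C * t ^ 3 ≤ 1 / 16 := by
      calc C * t ^ 3 = (t * C) * t ^ 2 := by ring
        _ ≤ 1 * (1 / 4) ^ 2 := by gcongr; nlinarith
        _ = _ := by norm_num
    nlinarith
  have hD : 1 / 4 ≤ g * e := by nlinarith
  have hDpos : 0 < g * e := by linarith
  have h1 : P / (g * e) - L = (P - g * e * L) / (g * e) := by field_simp
  rw [h1, abs_div, abs_of_pos hDpos, div_le_iff₀ hDpos]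
  have d1 : |(1 - t - t ^ 2) * (1 - m * t + m * (m - 1) / 2 * t ^ 2) - g * e| ≤ (C + Cm) * t ^ 3 := by
    have : (1 - t - t ^ 2) * (1 - m * t + m * (m - 1) / 2 * t ^ 2) - g * e =
      -((g - (1 - t - t ^ 2)) * e + (1 - t - t ^ 2) * (e - (1 - m * t + m * (m - 1) / 2 * t ^ 2))) := by
      ring
    rw [this, abs_neg]
    refine (abs_add_le _ _).trans ?_
    rw [abs_mul, abs_mul, add_mul]
    have a1 : |e| ≤ 1 := by rw [abs_le]; constructor <;> linarith
    have a2 : |1 - t - t ^ 2| ≤ 1 := by rw [abs_le]; constructor <;> nlinarith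
    apply add_le_add
    · calc _ ≤ (C * t ^ 3) * 1 := by gcongr
        _ = _ := by ring
    · calc _ ≤ 1 * (Cm * t ^ 3) := by gcongr
        _ = _ := by ring
  have d2 : |(1 - N * (t + t ^ 2) + M * t ^ 2) - (1 - t - t ^ 2) * (1 - m * t + m * (m - 1) / 2 * t ^ 2) * L| ≤ Cr * t ^ 3 := by
    rw [← abs_of_pos hp3, ← abs_neg, abs_of_pos hp3]
    have : -((1 - N * (t + t ^ 2) + M * t ^ 2) - (1 - t - t ^ 2) * (1 - m * t + m * (m - 1) / 2 * t ^ 2) * L) =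
      (((-s2 - s1) + (s2 - s1 - 1) * l1 + (s1 - 1) * b) + (-s2 + (-s2 - s1) * l1 + (s2 - s1 - 1) * b) * t
    + (-s2 * l1 + (-s2 - s1) * b) * t ^ 2 + (-s2 * b) * t ^ 3) * t ^ 3 := by
      rw [hLdef, hs1, hs2, hl1, hb]
      ring
    rw [this, abs_mul, abs_of_pos hp3]
    gcongr
  have d3 : |((1 - t - t ^ 2) * (1 - m * t + m * (m - 1) / 2 * t ^ 2) - g * e) * L| ≤ (C + Cm) * t ^ 3 * CL := by
    rw [abs_mul]
    gcongr
  have h2 : P - g * e * L = (P - (1 - N * (t + t ^ 2) + M * t ^ 2)) +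
    ((1 - N * (t + t ^ 2) + M * t ^ 2) - (1 - t - t ^ 2) * (1 - m * t + m * (m - 1) / 2 * t ^ 2) * L)
    + ((1 - t - t ^ 2) * (1 - m * t + m * (m - 1) / 2 * t ^ 2) - g * e) * L := by ring
  rw [h2]
  calc _ ≤ C * t ^ 3 + Cr * t ^ 3 + (C + Cm) * t ^ 3 * CL :=
        (abs_add_le _ _).trans (add_le_add ((abs_add_le _ _).trans (add_le_add hP d2)) d3)
    _ = 4 * (C + Cr + (C + Cm) * CL) * t ^ 3 * (1 / 4) := by ring
    _ ≤ _ := by gcongr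

section Arc
set_option linter.unusedSectionVars false
variable {F V ι : Type} [Field F] [Fintype F] [AddCommGroup V] [Module F V] [Fintype V]
  [Fintype ι] [DecidableEq ι]

theorem Pr_card (p : (ι → V) → Prop) :
    Pr p = (Nat.card {v : ι → V // p v} : ℝ) / (Fintype.card F : ℝ) ^ (finrank F V * Fintype.card ι) := by
  classical
  unfold Pr Ex
  congr 1
  · rw [Finset.sum_boole, Nat.card_eq_fintype_card, Fintype.card_subtype]
  · rw [Fintype.card_fun, Module.card_eq_pow_finrank (K := F) (V := V)]
    push_cast
    rw [pow_mul]

theorem LI_iff_finrank (v : ι → V) (S : Finset ι) : LI F v S ↔ finrank F (sp F v S) = S.card := by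
  constructor
  · exact finrank_sp
  · intro h
    unfold LI LinearIndepOn
    rw [linearIndependent_iff_card_eq_finrank_span, Set.finrank]
    unfold sp at h
    rw [Set.image_eq_range] at h
    refine Eq.trans ?_ h.symm
    simp

theorem nz_fst (x : {x : V // x ≠ 0}) :
    (Projectivization.nonZeroEquivProjectivizationProdUnits F V x).1 = Projectivization.mk F x.1 x.2 := by
  rfl

theorem iSup_eq_sp {n k : ℕ} (w : Fin n → {x : Fin k → F // x ≠ 0}) (s : Finset (Fin n)) :
    (⨆ i ∈ s, (Projectivization.mk F (w i).1 (w i).2).submodule) = sp F (fun i => (w i).1) s := by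
  simp only [Projectivization.submodule_mk, sp]
  rw [Submodule.span_eq_iSup_of_singleton_spans, iSup_image]
  rfl

theorem arc_iff {n k : ℕ} (hk : 2 ≤ k) (hn : k < n) (w : Fin n → {x : Fin k → F // x ≠ 0}) :
    IsArc F n k (fun i => Projectivization.mk F (w i).1 (w i).2) ↔
      ∀ S : Finset (Fin n), S.card = k → LI F (fun i => (w i).1) S := by
  unfold IsArc
  have h2 : (∀ s : Finset (Fin n), s.card = k →
      Module.finrank F ↥(⨆ i ∈ s, (Projectivization.mk F (w i).1 (w i).2).submodule) = k) ↔
      ∀ S : Finset (Fin n), S.card = k → LI F (fun i => (w i).1) S := by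
    apply forall_congr'
    intro s
    apply imp_congr_right
    intro hs
    rw [LI_iff_finrank, iSup_eq_sp, hs]
  rw [h2, and_iff_right_iff_imp]
  intro h i j hij
  by_contra hne
  obtain ⟨S, hS1, -, hS2⟩ := Finset.exists_subsuperset_card_eq
    (Finset.subset_univ ({i, j} : Finset (Fin n))) (n := k) (by rw [Finset.card_pair hne]; omega)
    (by simp; omega)
  have := LI_mono hS1 (h S hS2)
  rw [LI_insert (by simpa using hne)] at this
  apply this.2
  have hm := (Projectivization.mk_eq_mk_iff' F _ _ (w i).2 (w j).2).1 hij
  obtain ⟨a, ha⟩ := hm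
  rw [← ha]
  exact Submodule.smul_mem _ _ (mem_sp (by simp) (fun i => (w i).1))

theorem arc_card {n k : ℕ} (hk : 2 ≤ k) (hn : k < n) :
    Nat.card {v : Fin n → (Fin k → F) // ∀ S : Finset (Fin n), S.card = k → LI F v S} =
      Nat.card {σ : Fin n → ℙ F (Fin k → F) // IsArc F n k σ} * (Fintype.card F - 1) ^ n := by
  classical
  let E : (Fin n → {x : Fin k → F // x ≠ 0}) ≃ (Fin n → ℙ F (Fin k → F)) × (Fin n → Fˣ) :=
    (Equiv.piCongrRight fun _ => Projectivization.nonZeroEquivProjectivizationProdUnits F (Fin k → F)).trans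
      (Equiv.arrowProdEquivProdArrow _ _ _)
  have hE : ∀ w, (E w).1 = fun i => Projectivization.mk F (w i).1 (w i).2 := fun w => rfl
  have e1 : {w : Fin n → {x : Fin k → F // x ≠ 0} //
      ∀ S : Finset (Fin n), S.card = k → LI F (fun i => (w i).1) S} ≃
      {p : (Fin n → ℙ F (Fin k → F)) × (Fin n → Fˣ) // IsArc F n k p.1} :=
    E.subtypeEquiv fun w => by rw [hE, arc_iff hk hn]
  have e2 : {p : (Fin n → ℙ F (Fin k → F)) × (Fin n → Fˣ) // IsArc F n k p.1} ≃
      {σ : Fin n → ℙ F (Fin k → F) // IsArc F n k σ} × (Fin n → Fˣ) :=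
    { toFun := fun p => (⟨p.1.1, p.2⟩, p.1.2)
      invFun := fun p => ⟨(p.1.1, p.2), p.1.2⟩
      left_inv := fun p => rfl
      right_inv := fun p => rfl }
  have nz : ∀ v : Fin n → (Fin k → F), (∀ S : Finset (Fin n), S.card = k → LI F v S) →
      ∀ i, v i ≠ 0 := by
    intro v h i
    obtain ⟨S, hS1, -, hS2⟩ := Finset.exists_subsuperset_card_eq
      (Finset.subset_univ ({i} : Finset (Fin n))) (n := k) (by simp; omega)
      (by simp; omega)
    exact LinearIndepOn.ne_zero (h S hS2) (hS1 (by simp))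
  have e3 : {v : Fin n → (Fin k → F) // ∀ S : Finset (Fin n), S.card = k → LI F v S} ≃
      {w : Fin n → {x : Fin k → F // x ≠ 0} //
      ∀ S : Finset (Fin n), S.card = k → LI F (fun i => (w i).1) S} :=
    { toFun := fun v => ⟨fun i => ⟨v.1 i, nz v.1 v.2 i⟩, v.2⟩
      invFun := fun w => ⟨fun i => (w.1 i).1, w.2⟩
      left_inv := fun p => rfl
      right_inv := fun p => rfl }
  rw [Nat.card_congr (e3.trans (e1.trans e2)), Nat.card_prod]
  congr 1
  rw [Nat.card_fun, Nat.card_eq_fintype_card, Fintype.card_units, Nat.card_fin]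

theorem GL_asym (k : ℕ) (hk : 2 ≤ k) :
    |(Nat.card (GL (Fin k) F) : ℝ) / (Fintype.card F : ℝ) ^ (k * k) - (1 - tt F - tt F ^ 2)| ≤
      2 * k * tt F ^ 3 := by
  have hr : finrank F (Fin k → F) = k := by simp
  have h1 := S_asym (F := F) (V := Fin k → F) (Finset.univ : Finset (Fin k)) (by simp) (by simpa using hk)
  have h2 := Pr_card (F := F) (fun v : Fin k → (Fin k → F) => LI F v Finset.univ)
  have h3 : Nat.card {v : Fin k → (Fin k → F) // LI F v Finset.univ} = Nat.card (GL (Fin k) F) := by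
    rw [Matrix.card_GL_field]
    have := card_linearIndependent (K := F) (V := Fin k → F) (k := k) (by simp)
    rw [hr] at this
    rw [← this]
    apply Nat.card_congr
    apply Equiv.subtypeEquivRight
    intro v
    unfold LI
    rw [Finset.coe_univ, linearIndepOn_univ_iff]
  rw [h3, hr, Fintype.card_fin] at h2
  rw [← h2]
  rw [Pr_not, hr] at h1
  rw [abs_sub_comm] at h1
  convert h1 using 2
  ring

theorem GL_div (k : ℕ) (hk : 2 ≤ k) :
    ((Nat.card (GL (Fin k) F) / (Fintype.card F - 1) : ℕ) : ℝ) =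
      (Nat.card (GL (Fin k) F) : ℝ) / ((Fintype.card F : ℝ) - 1) := by
  have h2 : 1 < Fintype.card F := Fintype.one_lt_card
  rw [Nat.cast_div]
  · rw [Nat.cast_sub h2.le, Nat.cast_one]
  · rw [Matrix.card_GL_field]
    refine dvd_trans ?_ (Finset.dvd_prod_of_mem _ (Finset.mem_univ (⟨0, by omega⟩ : Fin k)))
    have := Nat.sub_dvd_pow_sub_pow (Fintype.card F) 1 k
    simpa using this
  · rw [Nat.cast_ne_zero]; omega

end Arc
end Kaipa

/-- Kaipa's asymptotic: with `δ = k(n-k)`, `N = C(n,k)` and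
`b₂ = (N²-5N+4)/2 - Nδ(δ-n-3)/(2(δ+n+1)) - (n-1)(N-n) - (n²-3n+2)/2`, the number of
`PGL_k(F_q)`-classes of `n`-arcs, i.e. `C_{n,k}(q)/|PGL_k(F_q)|`, equals
`q^{δ-n+1} - (N-n) q^{δ-n} + b₂ q^{δ-n-1} + O(q^{δ-n-2})` as the prime power `q → ∞`. -/
theorem kaipa_asymptotic (n k : ℕ) (hk : 2 ≤ k) (hnk : k < n) :
    ∃ (c : ℝ) (Q₀ : ℕ),
      ∀ (F : Type) [Field F] [Fintype F] [DecidableEq F],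
        Q₀ ≤ Fintype.card F →
        (let q : ℝ := (Fintype.card F : ℝ)
         let δ : ℕ := k * (n - k)
         let N : ℕ := n.choose k
         let b₂ : ℝ := ((N : ℝ) ^ 2 - 5 * N + 4) / 2
            - ((N : ℝ) * δ * ((δ : ℝ) - n - 3)) / (2 * ((δ : ℝ) + n + 1))
            - ((n : ℝ) - 1) * ((N : ℝ) - n) - ((n : ℝ) ^ 2 - 3 * n + 2) / 2
         |(Nat.card {σ : Fin n → ℙ F (Fin k → F) // IsArc F n k σ} : ℝ) /
              ((Nat.card (GL (Fin k) F) / (Fintype.card F - 1) : ℕ) : ℝ)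
            - (q ^ ((δ : ℤ) - n + 1) - ((N : ℝ) - n) * q ^ ((δ : ℤ) - n)
                + b₂ * q ^ ((δ : ℤ) - n - 1))|
          ≤ c * q ^ ((δ : ℤ) - n - 2)) := by
  obtain ⟨C', t0, ht0, H⟩ := Kaipa.analytic (n - 1) (n.choose k) (Kaipa.MM (Fin n) k)
    (|Kaipa.C0 (Fin n) k| + 2 * k) (by positivity)
  refine ⟨C', ⌈1 / t0⌉₊ + 1, ?_⟩
  intro F _ _ _ hQ q δ N b₂
  have hr : Module.finrank F (Fin k → F) = k := by simp
  have hq1 : (1 : ℝ) < q := by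
    have : 1 < Fintype.card F := Fintype.one_lt_card
    simp only [q]
    exact_mod_cast this
  have hq0 : 0 < q := by linarith
  have htt : Kaipa.tt F = q⁻¹ := rfl
  have htpos : 0 < Kaipa.tt F := Kaipa.tt_pos
  have hle : Kaipa.tt F ≤ t0 := by
    rw [htt, inv_le_comm₀ hq0 ht0, ← one_div]
    have h1 : ((⌈1 / t0⌉₊ + 1 : ℕ) : ℝ) ≤ q := by
      simp only [q]
      exact_mod_cast hQ
    have h2 := Nat.le_ceil (1 / t0)
    push_cast at h1
    linarith
  have hP := Kaipa.good_asym (F := F) (V := Fin k → F) (ι := Fin n) (by rw [hr]; exact hk)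
    (by rw [hr, Fintype.card_fin]; exact hnk)
  rw [hr, Fintype.card_fin] at hP
  have hPc := Kaipa.Pr_card (F := F) (V := Fin k → F) (ι := Fin n)
    (fun v => ∀ S : Finset (Fin n), S.card = k → Kaipa.LI F v S)
  rw [Kaipa.arc_card hk hnk, hr, Fintype.card_fin] at hPc
  have hg := Kaipa.GL_asym (F := F) k hk
  have t3 : 0 ≤ Kaipa.tt F ^ 3 := by positivity
  have key := H (Kaipa.tt F) _ _ htpos hle
    (hP.trans (mul_le_mul_of_nonneg_right (by
      have := le_abs_self (Kaipa.C0 (Fin n) k)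
      have : (0 : ℝ) ≤ 2 * k := by positivity
      linarith) t3))
    (hg.trans (mul_le_mul_of_nonneg_right (by
      have := abs_nonneg (Kaipa.C0 (Fin n) k)
      linarith) t3))
  rw [hPc] at key
  rw [Kaipa.GL_div k hk]
  have hGL : (0 : ℝ) < Nat.card (GL (Fin k) F) := by exact_mod_cast Nat.card_pos
  have hcast : ((Fintype.card F - 1 : ℕ) : ℝ) = q - 1 := by
    rw [Nat.cast_sub Fintype.card_pos]; simp [q]
  have hn1 : ((n - 1 : ℕ) : ℝ) = n - 1 := by rw [Nat.cast_sub (by omega)]; simp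
  have hδ : (δ : ℝ) = k * ((n : ℝ) - k) := by
    simp only [δ]; rw [Nat.cast_mul, Nat.cast_sub hnk.le]
  have hMM := Kaipa.MM_eq (ι := Fin n) k hk (by simpa using hnk) n N δ (by simp) (by simp [N]) hδ
  have hb : Kaipa.MM (Fin n) k - N - N * n + n * (n - 1) / 2 + n + 1 = b₂ := by
    rw [hMM]; simp only [b₂]; ring
  set A : ℝ := (Nat.card {σ : Fin n → ℙ F (Fin k → F) // IsArc F n k σ} : ℝ) with hA
  set G : ℝ := (Nat.card (GL (Fin k) F) : ℝ) with hG
  have hX : (0:ℝ) < q ^ ((δ : ℤ) - n + 1) := zpow_pos hq0 _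
  have z0 : q ^ ((δ : ℤ) - n) = q ^ ((δ : ℤ) - n + 1) * q⁻¹ := by
    rw [← zpow_sub_one₀ hq0.ne']; congr 1; ring
  have z1 : q ^ ((δ : ℤ) - n - 1) = q ^ ((δ : ℤ) - n + 1) * q⁻¹ ^ 2 := by
    rw [zpow_sub_one₀ hq0.ne', z0]; ring
  have z2 : q ^ ((δ : ℤ) - n - 2) = q ^ ((δ : ℤ) - n + 1) * q⁻¹ ^ 3 := by
    rw [show (δ : ℤ) - n - 2 = (δ : ℤ) - n - 1 - 1 by ring, zpow_sub_one₀ hq0.ne', z1]; ring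
  have hmain : A / (G / (q - 1)) = q ^ ((δ : ℤ) - n + 1) *
      ((((Nat.card {σ : Fin n → ℙ F (Fin k → F) // IsArc F n k σ} * (Fintype.card F - 1) ^ n : ℕ) : ℝ)
        / q ^ (k * n)) / (G / q ^ (k * k) * (1 - q⁻¹) ^ (n - 1))) := by
    have e1 : q ^ ((δ : ℤ) - n + 1) = q ^ δ / q ^ n * q := by
      rw [zpow_add_one₀ hq0.ne', zpow_sub₀ hq0.ne', zpow_natCast, zpow_natCast]
    have e2 : (1 - q⁻¹ : ℝ) = (q - 1) / q := by field_simp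
    have e3 : q ^ (k * n) = q ^ δ * q ^ (k * k) := by
      rw [← pow_add]; congr 1
      simp only [δ]; rw [← Nat.mul_add]; congr 1; omega
    obtain ⟨m, rfl⟩ : ∃ m, n = m + 1 := ⟨n - 1, by omega⟩
    rw [e1, e2, e3, Nat.cast_mul, Nat.cast_pow, hcast, ← hA, Nat.add_sub_cancel, div_pow]
    have : q - 1 ≠ 0 := by linarith
    rw [pow_succ (q - 1), pow_succ q m]
    field_simp
  rw [hn1, htt, sub_add_cancel] at key
  rw [hb] at key
  rw [hmain, z0, z1, z2]
  have fin := mul_le_mul_of_nonneg_left key hX.le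
  rw [← abs_of_pos hX, ← abs_mul, abs_of_pos hX] at fin
  refine le_trans (le_of_eq ?_) (fin.trans (le_of_eq ?_))
  · congr 1
    rw [show (Fintype.card F : ℝ) = q from rfl, show (n.choose k : ℝ) = (N : ℝ) from rfl]
    ring
  · ring
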